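/- arXiv:2506.13098 — 7 statements merged into one kernel-verified Lean document; each statement's English description precedes it below -/
import Mathlib

section
/- Let H be a complex Hilbert space and let σ be a binary operation on B(H)_+ satisfying the four Kubo–Ando axioms. Suppose f : [0,∞) × [0,∞) → [0,∞) is a function such that (aI) σ (bI) = f(a,b)·I for all a, b ≥ 0. Then for all A, B ∈ B(H)_+ and every unit vector x ∈ H, ⟨(A σ B)x , x⟩ ≤ f(⟨Ax , x⟩, ⟨Bx , x⟩). -/
/-! Compress to the unit vector `x`. With `P` the orthogonal projection onto `ℂ x` one has
`P A P = ⟨Ax, x⟩ P ≤ ⟨Ax, x⟩ I`, and likewise for `B`. The transformer inequality for `T = P`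
followed by monotonicity gives
`P (A σ B) P ≤ (P A P) σ (P B P) ≤ (⟨Ax, x⟩ I) σ (⟨Bx, x⟩ I) = f(⟨Ax, x⟩, ⟨Bx, x⟩) I`,
and evaluating both ends at `x = P x` is the claim. -/


open Filter Topology ContinuousLinearMap

variable {H : Type*} [NormedAddCommGroup H] [InnerProductSpace ℂ H] [CompleteSpace H]

/-- The Loewner order on bounded operators: `A ≤ B` iff `B - A` is positive. -/
def OpLE (A B : H →L[ℂ] H) : Prop := (B - A).IsPositive

/-- `Xₙ ↓ X`: a non-increasing sequence converging strongly to `X`. -/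
def DownTo (X : ℕ → H →L[ℂ] H) (L : H →L[ℂ] H) : Prop :=
  (∀ n, OpLE (X (n+1)) (X n)) ∧ ∀ v : H, Tendsto (fun n => X n v) atTop (𝓝 (L v))

/-- The compression of a positive operator to the line of a unit vector is dominated by the scalar
operator given by its quadratic form there,
because `1 - P` is again a projection, hence positive. -/
lemma compress_le
    (A : H →L[ℂ] H) (hA : A.IsPositive) (x : H) (hx : ‖x‖ = 1) :
    OpLE (InnerProductSpace.rankOne ℂ x x ∘L A ∘L InnerProductSpace.rankOne ℂ x x)
      ((A.reApplyInnerSelf x : ℂ) • (1 : H →L[ℂ] H)) := by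
  have ha : (0 : ℝ) ≤ A.reApplyInnerSelf x := hA.re_inner_nonneg_left x
  have hre : inner ℂ x (A x) = (A.reApplyInnerSelf x : ℂ) := by
    refine (hA.isSymmetric x x).symm.trans ?_
    exact (hA.isSymmetric.coe_re_inner_apply_self x).symm
  have hcomp : InnerProductSpace.rankOne ℂ x x ∘L A ∘L InnerProductSpace.rankOne ℂ x x
      = (A.reApplyInnerSelf x : ℂ) • InnerProductSpace.rankOne ℂ x x := by
    ext v
    simp only [comp_apply, smul_apply, InnerProductSpace.rankOne_apply, map_smul, hre]
    exact smul_comm _ _ _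
  have hP : (1 - InnerProductSpace.rankOne ℂ x x : H →L[ℂ] H).IsPositive := by
    have hproj : IsStarProjection (InnerProductSpace.rankOne ℂ x x : H →L[ℂ] H) :=
      InnerProductSpace.isStarProjection_rankOne_self hx
    exact ContinuousLinearMap.IsPositive.of_isStarProjection hproj.one_sub
  unfold OpLE
  rw [hcomp, ← smul_sub]
  exact hP.smul_of_nonneg (by exact_mod_cast ha)

/-- If `σ` is a Kubo–Ando operator mean on `B(H)₊` and
`(aI) σ (bI) = f(a,b)·I` for all scalars `a, b ≥ 0`, then for all positive operators `A, B`
and every unit vector `x`, `⟨(AσB)x, x⟩ ≤ f(⟨Ax,x⟩, ⟨Bx,x⟩)`. -/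
theorem stmt_3
    (σ : (H →L[ℂ] H) → (H →L[ℂ] H) → (H →L[ℂ] H))
    (hσ_pos : ∀ A B : H →L[ℂ] H, A.IsPositive → B.IsPositive → (σ A B).IsPositive)
    (hσ_mono : ∀ A B C D : H →L[ℂ] H, A.IsPositive → B.IsPositive → C.IsPositive →
      D.IsPositive → OpLE A C → OpLE B D → OpLE (σ A B) (σ C D))
    (hσ_transf : ∀ A B T : H →L[ℂ] H, A.IsPositive → B.IsPositive → T.IsPositive →
      OpLE (T ∘L (σ A B) ∘L T) (σ (T ∘L A ∘L T) (T ∘L B ∘L T)))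
    (hσ_cont : ∀ (As Bs : ℕ → H →L[ℂ] H) (A B : H →L[ℂ] H),
      (∀ n, (As n).IsPositive) → (∀ n, (Bs n).IsPositive) →
      A.IsPositive → B.IsPositive →
      DownTo As A → DownTo Bs B → DownTo (fun n => σ (As n) (Bs n)) (σ A B))
    (hσ_norm : σ 1 1 = 1)
    (f : ℝ → ℝ → ℝ)
    (hf : ∀ a b : ℝ, 0 ≤ a → 0 ≤ b →
      σ ((a : ℂ) • (1 : H →L[ℂ] H)) ((b : ℂ) • (1 : H →L[ℂ] H)) = (f a b : ℂ) • 1)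
    (A B : H →L[ℂ] H) (hA : A.IsPositive) (hB : B.IsPositive)
    (x : H) (hx : ‖x‖ = 1) :
    (σ A B).reApplyInnerSelf x ≤ f (A.reApplyInnerSelf x) (B.reApplyInnerSelf x) := by
  have hP : (InnerProductSpace.rankOne ℂ x x : H →L[ℂ] H).IsPositive :=
    InnerProductSpace.isPositive_rankOne_self x
  have ha : (0 : ℝ) ≤ A.reApplyInnerSelf x := hA.re_inner_nonneg_left x
  have hb : (0 : ℝ) ≤ B.reApplyInnerSelf x := hB.re_inner_nonneg_left x
  have hscal : ∀ a : ℝ, 0 ≤ a → ((a : ℂ) • (1 : H →L[ℂ] H)).IsPositive := fun a h =>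
    ContinuousLinearMap.isPositive_one.smul_of_nonneg (by exact_mod_cast h)
  have hcompr : ∀ C : H →L[ℂ] H, C.IsPositive →
      (InnerProductSpace.rankOne ℂ x x ∘L C ∘L InnerProductSpace.rankOne ℂ x x).IsPositive := by
    intro C hC
    have h := hC.conj_adjoint (InnerProductSpace.rankOne ℂ x x)
    rwa [hP.isSelfAdjoint.adjoint_eq] at h
  have h1 := hσ_transf A B _ hA hB hP
  have h2 := hσ_mono _ _ _ _ (hcompr A hA) (hcompr B hB) (hscal _ ha) (hscal _ hb)
    (compress_le A hA x hx) (compress_le B hB x hx)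
  rw [hf _ _ ha hb] at h2
  have k1 := h1.re_inner_nonneg_left x
  have k2 := h2.re_inner_nonneg_left x
  have hPx : InnerProductSpace.rankOne ℂ x x x = x := by
    simp [InnerProductSpace.rankOne_apply, hx]
  have hxx : inner ℂ x x = (1 : ℂ) := by simp [hx]
  have hS : (inner ℂ (InnerProductSpace.rankOne ℂ x x (σ A B x)) x : ℂ)
      = inner ℂ (σ A B x) x := by
    rw [InnerProductSpace.rankOne_apply, inner_smul_left, hxx, mul_one, inner_conj_symm]
  simp only [sub_apply, comp_apply, hPx, inner_sub_left, map_sub, hS, smul_apply, one_apply_eq_self,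
    inner_smul_left, hxx, Complex.conj_ofReal, mul_one] at k1 k2
  have hfr : RCLike.re ((f (A.reApplyInnerSelf x) (B.reApplyInnerSelf x) : ℝ) : ℂ)
      = f (A.reApplyInnerSelf x) (B.reApplyInnerSelf x) := Complex.ofReal_re _
  rw [hfr] at k2
  rw [reApplyInnerSelf_apply]
  linarith
end

section
/- Let H be a complex Hilbert space and let M : (B(H)_+)^3 → B(H)_+ satisfy monotonicity (A_j ≤ B_j for j = 1,2,3 implies M(A_1,A_2,A_3) ≤ M(B_1,B_2,B_3)) and the transformer inequality (S·M(A_1,A_2,A_3)·S ≤ M(SA_1S, SA_2S, SA_3S) for all S ∈ B(H)_+). Let P be an orthogonal projection on H and let A, B, C ∈ B(H)_+ commute with P. Then M(A,B,C) commutes with P and M(A,B,C)·P = M(AP, BP, CP)·P. -/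
/-!
Write `X = M(A,B,C)` and `Y = M(AP,BP,CP)`. Since `PAP = AP ≤ A`, and likewise for `B` and `C`, the
transformer inequality with `S = P` followed by monotonicity gives `PXP ≤ Y ≤ X`. The positive
operators `Z = Y - PXP ≤ W = X - PXP` satisfy `PWP = 0`, so both quadratic forms vanish on the
range of `P`, and a positive operator kills every vector on which its form vanishes. Hence
`WP = ZP = 0`, that is `XP = PXP = YP`; taking adjoints, `PX = PXP = XP`.
-/

open Filter Topology ContinuousLinearMap

variable {H : Type*} [NormedAddCommGroup H] [InnerProductSpace ℂ H] [CompleteSpace H]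

/-- A positive operator is of the form `S† S`, so its quadratic form vanishes only on its
kernel. -/
lemma apply_eq_zero_of_isPositive {Z : H →L[ℂ] H} (hZ : Z.IsPositive) {v : H}
    (hv : Z.reApplyInnerSelf v = 0) : Z v = 0 := by
  obtain ⟨S, rfl⟩ := CStarAlgebra.nonneg_iff_eq_star_mul_self.mp
    ((ContinuousLinearMap.nonneg_iff_isPositive Z).mpr hZ)
  have h : ‖S v‖ ^ 2 = 0 := by
    rw [← hv, ContinuousLinearMap.reApplyInnerSelf_apply]
    exact ContinuousLinearMap.apply_norm_sq_eq_inner_adjoint_left S v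
  have h' : S v = 0 := by simpa using h
  simp [h']

lemma isPositive_compression {P A : H →L[ℂ] H} (hP_sa : IsSelfAdjoint P) (hA : A.IsPositive) :
    (P ∘L A ∘L P).IsPositive := by
  have h := hA.conj_adjoint P
  rwa [hP_sa.adjoint_eq] at h

/-- With `Q = 1 - P` one has `A - PAP = QAQ` when `A` commutes with `P`. -/
lemma compression_le {P A : H →L[ℂ] H} (hP_proj : P ∘L P = P) (hP_sa : IsSelfAdjoint P)
    (hA : A.IsPositive) (hAP : A ∘L P = P ∘L A) : OpLE (P ∘L A ∘L P) A := by
  have h := isPositive_compression (P := 1 - P) ((IsSelfAdjoint.one _).sub hP_sa) hA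
  have e : (1 - P) ∘L A ∘L (1 - P) = A - P ∘L A ∘L P := by
    change P * P = P at hP_proj
    change A * P = P * A at hAP
    change (1 - P) * (A * (1 - P)) = A - P * (A * P)
    have h2 : P * (A * P) = A * P := by rw [hAP, ← mul_assoc, hP_proj]
    simp only [mul_sub, sub_mul, mul_one, one_mul, h2, ← hAP]
    abel
  rwa [e] at h

/-- If a three-variable map `M` on `B(H)₊` is monotone and satisfies the
transformer inequality, `P` is an orthogonal projection and `A, B, C` are positive operators
commuting with `P`, then `M(A,B,C)` commutes with `P` and
`M(A,B,C)·P = M(AP,BP,CP)·P`. -/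
theorem stmt_4
    (M : (H →L[ℂ] H) → (H →L[ℂ] H) → (H →L[ℂ] H) → (H →L[ℂ] H))
    (hM_pos : ∀ A B C : H →L[ℂ] H, A.IsPositive → B.IsPositive → C.IsPositive →
      (M A B C).IsPositive)
    (hM_mono : ∀ A₁ A₂ A₃ B₁ B₂ B₃ : H →L[ℂ] H,
      A₁.IsPositive → A₂.IsPositive → A₃.IsPositive →
      B₁.IsPositive → B₂.IsPositive → B₃.IsPositive →
      OpLE A₁ B₁ → OpLE A₂ B₂ → OpLE A₃ B₃ → OpLE (M A₁ A₂ A₃) (M B₁ B₂ B₃))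
    (hM_transf : ∀ A₁ A₂ A₃ S : H →L[ℂ] H,
      A₁.IsPositive → A₂.IsPositive → A₃.IsPositive → S.IsPositive →
      OpLE (S ∘L (M A₁ A₂ A₃) ∘L S) (M (S ∘L A₁ ∘L S) (S ∘L A₂ ∘L S) (S ∘L A₃ ∘L S)))
    (P : H →L[ℂ] H) (hP_proj : P ∘L P = P) (hP_sa : IsSelfAdjoint P)
    (A B C : H →L[ℂ] H) (hA : A.IsPositive) (hB : B.IsPositive) (hC : C.IsPositive)
    (hAP : A ∘L P = P ∘L A) (hBP : B ∘L P = P ∘L B) (hCP : C ∘L P = P ∘L C) :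
    (M A B C) ∘L P = P ∘L (M A B C) ∧
    (M A B C) ∘L P = (M (A ∘L P) (B ∘L P) (C ∘L P)) ∘L P := by
  have comp {T : H →L[ℂ] H} (hT : T ∘L P = P ∘L T) : P ∘L T ∘L P = T ∘L P := by
    rw [hT, ← ContinuousLinearMap.comp_assoc, hP_proj]
  have hP : P.IsPositive := by
    have h := isPositive_compression hP_sa (ContinuousLinearMap.isPositive_one (E := H) (𝕜 := ℂ))
    have e : P ∘L (1 : H →L[ℂ] H) ∘L P = P := hP_proj
    rwa [e] at h
  have h₁ := hM_transf A B C P hA hB hC hP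
  have h₂ := hM_mono _ _ _ _ _ _ (isPositive_compression hP_sa hA)
    (isPositive_compression hP_sa hB) (isPositive_compression hP_sa hC) hA hB hC
    (compression_le hP_proj hP_sa hA hAP) (compression_le hP_proj hP_sa hB hBP)
    (compression_le hP_proj hP_sa hC hCP)
  rw [comp hAP, comp hBP, comp hCP] at h₁ h₂
  have hX := (hM_pos A B C hA hB hC).isSelfAdjoint
  generalize M (A ∘L P) (B ∘L P) (C ∘L P) = Y at *
  generalize M A B C = X at *
  unfold OpLE at h₁ h₂
  have hW : (X - P ∘L X ∘L P).IsPositive := by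
    have h := h₂.add h₁
    rwa [sub_add_sub_cancel] at h
  have hPP (x : H) : P (P x) = P x := DFunLike.congr_fun hP_proj x
  have hW0 (x : H) : (X - P ∘L X ∘L P).reApplyInnerSelf (P x) = 0 := by
    have h : inner ℂ (P (X (P x))) (P x) = inner ℂ (X (P x)) (P (P x)) := hP_sa.isSymmetric _ _
    simp [ContinuousLinearMap.reApplyInnerSelf_apply, inner_sub_left, hPP, h]
  have hZ0 (x : H) : (Y - P ∘L X ∘L P).reApplyInnerSelf (P x) = 0 := by
    refine le_antisymm ?_ (h₁.2 _)
    have h := h₂.2 (P x)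
    rw [← hW0 x]
    simp only [ContinuousLinearMap.reApplyInnerSelf_apply, sub_apply, inner_sub_left, map_sub]
      at h ⊢
    linarith
  have hXP : X ∘L P = P ∘L X ∘L P := by
    ext x
    simpa [sub_eq_zero, hPP] using apply_eq_zero_of_isPositive hW (hW0 x)
  have hYP : Y ∘L P = P ∘L X ∘L P := by
    ext x
    simpa [sub_eq_zero, hPP] using apply_eq_zero_of_isPositive h₁ (hZ0 x)
  refine ⟨?_, hXP.trans hYP.symm⟩
  have h := congrArg ContinuousLinearMap.adjoint hXP
  simp only [ContinuousLinearMap.adjoint_comp, hX.adjoint_eq, hP_sa.adjoint_eq] at h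
  rw [hXP, h, ContinuousLinearMap.comp_assoc]
end

section
/- Let H be a complex Hilbert space and let M : (B(H)_+)^3 → B(H)_+ satisfy monotonicity (A_j ≤ B_j for j = 1,2,3 implies M(A_1,A_2,A_3) ≤ M(B_1,B_2,B_3)) and the transformer inequality (S·M(A_1,A_2,A_3)·S ≤ M(SA_1S, SA_2S, SA_3S) for all S ∈ B(H)_+). Suppose g : [0,∞)^3 → [0,∞) is a function such that M(aI, bI, cI) = g(a,b,c)·I for all a, b, c ≥ 0. Then for all A, B, C ∈ B(H)_+ and every unit vector v ∈ H, ⟨M(A,B,C)v , v⟩ ≤ g(⟨Av , v⟩, ⟨Bv , v⟩, ⟨Cv , v⟩). -/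
/-!
Let `P` be the rank-one projection onto the line spanned by the unit vector `v`. For positive `T`,
the compression `P T P` equals `⟨T v, v⟩ P`, which lies below `⟨T v, v⟩ I`. The transformer
inequality with `S = P`, followed by monotonicity, therefore gives
`P M(A,B,C) P ≤ M(P A P, P B P, P C P) ≤ M(a I, b I, c I) = g(a,b,c) I`
with `a = ⟨A v, v⟩`, `b = ⟨B v, v⟩`, `c = ⟨C v, v⟩`. Taking the quadratic form at `v = P v`
yields the claim.
-/

open Filter Topology ContinuousLinearMap

variable {H : Type*} [NormedAddCommGroup H] [InnerProductSpace ℂ H] [CompleteSpace H]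

open InnerProductSpace in
/-- The compression of a positive operator to the line spanned by `v` is the scalar `⟨T v, v⟩`
times the rank-one operator; positivity makes that scalar real. -/
lemma rankOne_conj_eq {T : H →L[ℂ] H} (hT : T.IsPositive) (v : H) :
    rankOne ℂ v v ∘L T ∘L rankOne ℂ v v = (T.reApplyInnerSelf v : ℂ) • rankOne ℂ v v := by
  have h : (T.reApplyInnerSelf v : ℂ) = inner ℂ v (T v) := by
    rw [← hT.inner_left_eq_inner_right]
    exact ((isPositive_iff_complex T).1 hT v).1
  ext x
  simp [h, smul_smul, mul_comm]

open InnerProductSpace in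
lemma rankOne_conj_isPositive {T : H →L[ℂ] H} (hT : T.IsPositive) (v : H) :
    (rankOne ℂ v v ∘L T ∘L rankOne ℂ v v).IsPositive := by
  rw [rankOne_conj_eq hT]
  exact (isPositive_rankOne_self v).smul_of_nonneg (by exact_mod_cast hT.2 v)

open InnerProductSpace in
lemma rankOne_conj_opLE {T : H →L[ℂ] H} (hT : T.IsPositive) {v : H} (hv : ‖v‖ = 1) :
    OpLE (rankOne ℂ v v ∘L T ∘L rankOne ℂ v v)
      ((T.reApplyInnerSelf v : ℂ) • (1 : H →L[ℂ] H)) := by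
  rw [rankOne_conj_eq hT, OpLE, ← smul_sub]
  exact (IsPositive.of_isStarProjection
    (isStarProjection_rankOne_self hv).one_sub).smul_of_nonneg (by exact_mod_cast hT.2 v)

lemma OpLE.reApplyInnerSelf_le {S T : H →L[ℂ] H} (h : OpLE S T) (v : H) :
    S.reApplyInnerSelf v ≤ T.reApplyInnerSelf v := by
  have := h.2 v
  simp only [reApplyInnerSelf_apply, sub_apply, inner_sub_left, map_sub] at this ⊢
  linarith

/-- If a three-variable map `M` on `B(H)₊` is monotone, satisfies the
transformer inequality, and `M(aI, bI, cI) = g(a,b,c)·I` for scalars `a, b, c ≥ 0`, then for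
positive `A, B, C` and every unit vector `v`,
`⟨M(A,B,C)v, v⟩ ≤ g(⟨Av,v⟩, ⟨Bv,v⟩, ⟨Cv,v⟩)`. -/
theorem stmt_5
    (M : (H →L[ℂ] H) → (H →L[ℂ] H) → (H →L[ℂ] H) → (H →L[ℂ] H))
    (hM_pos : ∀ A B C : H →L[ℂ] H, A.IsPositive → B.IsPositive → C.IsPositive →
      (M A B C).IsPositive)
    (hM_mono : ∀ A₁ A₂ A₃ B₁ B₂ B₃ : H →L[ℂ] H,
      A₁.IsPositive → A₂.IsPositive → A₃.IsPositive →
      B₁.IsPositive → B₂.IsPositive → B₃.IsPositive →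
      OpLE A₁ B₁ → OpLE A₂ B₂ → OpLE A₃ B₃ → OpLE (M A₁ A₂ A₃) (M B₁ B₂ B₃))
    (hM_transf : ∀ A₁ A₂ A₃ S : H →L[ℂ] H,
      A₁.IsPositive → A₂.IsPositive → A₃.IsPositive → S.IsPositive →
      OpLE (S ∘L (M A₁ A₂ A₃) ∘L S) (M (S ∘L A₁ ∘L S) (S ∘L A₂ ∘L S) (S ∘L A₃ ∘L S)))
    (g : ℝ → ℝ → ℝ → ℝ)
    (hg : ∀ a b c : ℝ, 0 ≤ a → 0 ≤ b → 0 ≤ c →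
      M ((a : ℂ) • (1 : H →L[ℂ] H)) ((b : ℂ) • (1 : H →L[ℂ] H)) ((c : ℂ) • (1 : H →L[ℂ] H))
        = (g a b c : ℂ) • 1)
    (A B C : H →L[ℂ] H) (hA : A.IsPositive) (hB : B.IsPositive) (hC : C.IsPositive)
    (v : H) (hv : ‖v‖ = 1) :
    (M A B C).reApplyInnerSelf v
      ≤ g (A.reApplyInnerSelf v) (B.reApplyInnerSelf v) (C.reApplyInnerSelf v) := by
  have ha := hA.2 v
  have hb := hB.2 v
  have hc := hC.2 v
  have scalar_pos : ∀ a : ℝ, 0 ≤ a → ((a : ℂ) • (1 : H →L[ℂ] H)).IsPositive := fun a h =>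
    isPositive_one.smul_of_nonneg (by exact_mod_cast h)
  have h₁ := (hM_transf A B C _ hA hB hC
    (InnerProductSpace.isPositive_rankOne_self v)).reApplyInnerSelf_le v
  have h₂ := (hM_mono _ _ _ _ _ _ (rankOne_conj_isPositive hA v) (rankOne_conj_isPositive hB v)
    (rankOne_conj_isPositive hC v) (scalar_pos _ ha) (scalar_pos _ hb) (scalar_pos _ hc)
    (rankOne_conj_opLE hA hv) (rankOne_conj_opLE hB hv)
    (rankOne_conj_opLE hC hv)).reApplyInnerSelf_le v
  rw [hg _ _ _ ha hb hc] at h₂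
  have h := h₁.trans h₂
  rw [rankOne_conj_eq (hM_pos A B C hA hB hC)] at h
  have scalar_form : ∀ r : ℝ, RCLike.re (inner ℂ ((r : ℂ) • v) v) = r := fun r => by
    rw [inner_smul_left, inner_self_eq_norm_sq_to_K, hv]
    simp
  have hPv : InnerProductSpace.rankOne ℂ v v v = v := by
    simp [inner_self_eq_norm_sq_to_K, hv]
  change RCLike.re (inner ℂ (((M A B C).reApplyInnerSelf v : ℂ) •
    InnerProductSpace.rankOne ℂ v v v) v) ≤ RCLike.re (inner ℂ ((g _ _ _ : ℂ) • v) v) at h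
  rwa [hPv, scalar_form, scalar_form] at h
end

section
/- Let H be a complex Hilbert space, let σ_1, σ_2, σ_3 be binary operations on B(H)_+ each satisfying the four Kubo–Ando axioms, let r_1, r_2, r_3 ∈ (0,1), and assume A σ_k B ≤ (1−r_k)A + r_k B for all A, B ∈ B(H)_+ and all k, and for at least two indices k: for all real α, β ≥ 0, ((1−r_k)α + r_k β)·I ≤ (αI) σ_k (βI) implies α = β. For A, B, C ∈ B(H)_+, let S(A,B,C) denote the common weak limit of the ALM-sequence from (A,B,C) with (σ_1,σ_2,σ_3). If A^{(k)} ↓ A, B^{(k)} ↓ B and C^{(k)} ↓ C in B(H)_+ as k → ∞, then S(A^{(k)}, B^{(k)}, C^{(k)}) ↓ S(A,B,C). -/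
/-!
The key point is that `S(A,B,C)` is an infimum of continuous expressions. The cyclic stochastic
matrix that describes one step of the dominating arithmetic recursion has a positive stationary
vector `(p, q, s)`, so `Tₙ = p Aₙ + q Bₙ + s Cₙ` is non-increasing in `n` along every ALM-sequence
(`weighted_step`); since it converges weakly to `(p + q + s) S`, every `Tₙ` dominates
`(p + q + s) S`. For fixed `n` the operators `Aₙ, Bₙ, Cₙ` depend monotonically and downward
continuously on the initial triple (`alm_downTo`). Hence `⟨S(A⁽ᵏ⁾,B⁽ᵏ⁾,C⁽ᵏ⁾) x, x⟩` decreases in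
`k`, is bounded below by `⟨S(A,B,C) x, x⟩`, and is eventually below any number exceeding it:
choose `n` with `⟨Tₙ x, x⟩` close to its limit, then `k` large. Finally, weak convergence of a
non-increasing sequence of positive operators to its lower bound is strong (`downTo_of_weak`).
-/

open Filter Topology ContinuousLinearMap

variable {H : Type*} [NormedAddCommGroup H] [InnerProductSpace ℂ H] [CompleteSpace H]

/-- The four Kubo–Ando axioms for a binary operation on `B(H)₊`. -/
def KuboAndo (σ : (H →L[ℂ] H) → (H →L[ℂ] H) → (H →L[ℂ] H)) : Prop :=
  (∀ A B : H →L[ℂ] H, A.IsPositive → B.IsPositive → (σ A B).IsPositive) ∧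
  (∀ A B C D : H →L[ℂ] H, A.IsPositive → B.IsPositive → C.IsPositive → D.IsPositive →
    OpLE A C → OpLE B D → OpLE (σ A B) (σ C D)) ∧
  (∀ A B T : H →L[ℂ] H, A.IsPositive → B.IsPositive → T.IsPositive →
    OpLE (T ∘L (σ A B) ∘L T) (σ (T ∘L A ∘L T) (T ∘L B ∘L T))) ∧
  (∀ (As Bs : ℕ → H →L[ℂ] H) (A B : H →L[ℂ] H),
    (∀ n, (As n).IsPositive) → (∀ n, (Bs n).IsPositive) → A.IsPositive → B.IsPositive →
    DownTo As A → DownTo Bs B → DownTo (fun n => σ (As n) (Bs n)) (σ A B)) ∧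
  σ 1 1 = 1

/-- The ALM-sequence from `(A,B,C)` with `(σ₁,σ₂,σ₃)`. -/
def ALMseq (σ₁ σ₂ σ₃ : (H →L[ℂ] H) → (H →L[ℂ] H) → (H →L[ℂ] H))
    (A B C : H →L[ℂ] H) : ℕ → (H →L[ℂ] H) × (H →L[ℂ] H) × (H →L[ℂ] H)
  | 0 => (A, B, C)
  | n + 1 =>
    let t := ALMseq σ₁ σ₂ σ₃ A B C n
    (σ₁ t.2.1 t.2.2, σ₂ t.2.2 t.1, σ₃ t.1 t.2.1)

/-- Strict concavity (relative to weight `r`) tested on nonnegative scalar multiples of `1`. -/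
def StrictConc (σ : (H →L[ℂ] H) → (H →L[ℂ] H) → (H →L[ℂ] H)) (r : ℝ) : Prop :=
  ∀ α β : ℝ, 0 ≤ α → 0 ≤ β →
    OpLE ((((1 - r) * α + r * β : ℝ) : ℂ) • (1 : H →L[ℂ] H))
      (σ ((α : ℂ) • (1 : H →L[ℂ] H)) ((β : ℂ) • (1 : H →L[ℂ] H))) → α = β

/-- `S` is the common weak limit of the ALM-sequence from `(A,B,C)` with `(σ₁,σ₂,σ₃)`. -/
def IsWeakALMLimit (σ₁ σ₂ σ₃ : (H →L[ℂ] H) → (H →L[ℂ] H) → (H →L[ℂ] H))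
    (A B C S : H →L[ℂ] H) : Prop :=
  (∀ x : H, Tendsto (fun n => ((ALMseq σ₁ σ₂ σ₃ A B C n).1).reApplyInnerSelf x)
    atTop (𝓝 (S.reApplyInnerSelf x))) ∧
  (∀ x : H, Tendsto (fun n => ((ALMseq σ₁ σ₂ σ₃ A B C n).2.1).reApplyInnerSelf x)
    atTop (𝓝 (S.reApplyInnerSelf x))) ∧
  (∀ x : H, Tendsto (fun n => ((ALMseq σ₁ σ₂ σ₃ A B C n).2.2).reApplyInnerSelf x)
    atTop (𝓝 (S.reApplyInnerSelf x)))

theorem OpLE.re_le {A B : H →L[ℂ] H} (h : OpLE A B) (x : H) :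
    A.reApplyInnerSelf x ≤ B.reApplyInnerSelf x := by
  have := h.2 x
  simp only [reApplyInnerSelf_apply, sub_apply, inner_sub_left, map_sub] at this ⊢
  linarith

theorem opLE_of_re_le {A B : H →L[ℂ] H} (hA : A.IsPositive) (hB : B.IsPositive)
    (h : ∀ x, A.reApplyInnerSelf x ≤ B.reApplyInnerSelf x) : OpLE A B := by
  refine ⟨hB.1.sub hA.1, fun x => ?_⟩
  have := h x
  simp only [reApplyInnerSelf_apply, sub_apply, inner_sub_left, map_sub] at this ⊢
  linarith

theorem DownTo.re_tendsto {X : ℕ → H →L[ℂ] H} {L : H →L[ℂ] H} (h : DownTo X L) (x : H) :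
    Tendsto (fun n => (X n).reApplyInnerSelf x) atTop (𝓝 (L.reApplyInnerSelf x)) := by
  simp only [reApplyInnerSelf_apply]
  exact (RCLike.continuous_re.tendsto _).comp ((h.2 x).inner tendsto_const_nhds)

theorem DownTo.re_le {X : ℕ → H →L[ℂ] H} {L : H →L[ℂ] H} (h : DownTo X L) (x : H) (n : ℕ) :
    L.reApplyInnerSelf x ≤ (X n).reApplyInnerSelf x :=
  (antitone_nat_of_succ_le (f := fun n => (X n).reApplyInnerSelf x)
    fun n => (h.1 n).re_le x).le_of_tendsto (h.re_tendsto x) n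

/-- If `0 ≤ D ≤ E`, then `‖D x‖² ≤ (‖E‖ + 1) ⟨D x, x⟩`. -/
theorem norm_sq_le_of_pos {D E : H →L[ℂ] H} (hD : D.IsPositive)
    (hDE : ∀ x, D.reApplyInnerSelf x ≤ E.reApplyInnerSelf x) (x : H) :
    ‖D x‖ ^ 2 ≤ (‖E‖ + 1) * D.reApplyInnerSelf x := by
  set M : ℝ := ‖E‖ + 1 with hM
  have hMpos : 0 < M := by positivity
  have hc : D.reApplyInnerSelf (D x) ≤ M * ‖D x‖ ^ 2 := by
    refine (hDE (D x)).trans ?_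
    rw [reApplyInnerSelf_apply]
    calc RCLike.re (inner ℂ (E (D x)) (D x)) ≤ ‖E (D x)‖ * ‖D x‖ := re_inner_le_norm _ _
      _ ≤ (‖E‖ * ‖D x‖) * ‖D x‖ := by gcongr; exact E.le_opNorm _
      _ ≤ M * ‖D x‖ ^ 2 := by nlinarith [sq_nonneg ‖D x‖]
  -- positivity of the form at `M x - D x` replaces the Cauchy–Schwarz inequality for `D`
  have h0 := hD.2 ((M : ℂ) • x - D x)
  have hs : inner ℂ (D (D x)) x = inner ℂ (D x) (D x) := hD.1 _ _
  have hn : RCLike.re (inner ℂ (D x) (D x)) = ‖D x‖ ^ 2 := inner_self_eq_norm_sq _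
  have e : D.reApplyInnerSelf ((M : ℂ) • x - D x) =
      M ^ 2 * D.reApplyInnerSelf x - 2 * M * ‖D x‖ ^ 2 + D.reApplyInnerSelf (D x) := by
    simp only [reApplyInnerSelf_apply, map_sub, map_smul, inner_sub_left, inner_sub_right,
      inner_smul_left, inner_smul_right, hs, ← hn]
    simp
    ring
  have h1 : 0 ≤ D.reApplyInnerSelf ((M : ℂ) • x - D x) := h0
  rw [e] at h1
  have : 0 ≤ M * (M * D.reApplyInnerSelf x - ‖D x‖ ^ 2) := by nlinarith
  have := nonneg_of_mul_nonneg_right this hMpos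
  linarith

/-- A non-increasing sequence of positive operators that converges weakly to a positive
lower bound converges strongly: `X n - L` lies between `0` and `X 0 - L`, so
`norm_sq_le_of_pos` applies with a constant independent of `n`. -/
theorem downTo_of_weak {X : ℕ → H →L[ℂ] H} {L : H →L[ℂ] H} (hX : ∀ n, (X n).IsPositive)
    (hL : L.IsPositive)
    (hmono : ∀ n x, (X (n + 1)).reApplyInnerSelf x ≤ (X n).reApplyInnerSelf x)
    (hlow : ∀ n x, L.reApplyInnerSelf x ≤ (X n).reApplyInnerSelf x)
    (hlim : ∀ x, Tendsto (fun n => (X n).reApplyInnerSelf x) atTop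
      (𝓝 (L.reApplyInnerSelf x))) : DownTo X L := by
  refine ⟨fun n => opLE_of_re_le (hX _) (hX _) (hmono n), fun v => ?_⟩
  have hsub : ∀ n x, (X n - L).reApplyInnerSelf x =
      (X n).reApplyInnerSelf x - L.reApplyInnerSelf x := fun n x => by
    simp only [reApplyInnerSelf_apply, sub_apply, inner_sub_left, map_sub]
  have hanti : ∀ n x, (X n).reApplyInnerSelf x ≤ (X 0).reApplyInnerSelf x := fun n x =>
    antitone_nat_of_succ_le (f := fun n => (X n).reApplyInnerSelf x) (fun n => hmono n x)
      (Nat.zero_le n)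
  have hb : ∀ n, ‖X n v - L v‖ ^ 2 ≤
      (‖X 0 - L‖ + 1) * ((X n).reApplyInnerSelf v - L.reApplyInnerSelf v) := fun n => by
    have := norm_sq_le_of_pos (E := X 0 - L) (opLE_of_re_le hL (hX n) (hlow n))
      (fun x => by rw [hsub, hsub]; linarith [hanti n x]) v
    rwa [hsub] at this
  have hz : Tendsto (fun n => (‖X 0 - L‖ + 1) *
      ((X n).reApplyInnerSelf v - L.reApplyInnerSelf v)) atTop (𝓝 0) := by
    simpa using ((hlim v).sub_const (L.reApplyInnerSelf v)).const_mul (‖X 0 - L‖ + 1)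
  have hsq := squeeze_zero (fun n => sq_nonneg ‖X n v - L v‖) hb hz
  rw [tendsto_iff_norm_sub_tendsto_zero]
  simpa using hsq.sqrt

theorem alm_pos {σ₁ σ₂ σ₃ : (H →L[ℂ] H) → (H →L[ℂ] H) → (H →L[ℂ] H)}
    (h₁ : KuboAndo σ₁) (h₂ : KuboAndo σ₂) (h₃ : KuboAndo σ₃) {A B C : H →L[ℂ] H}
    (hA : A.IsPositive) (hB : B.IsPositive) (hC : C.IsPositive) (n : ℕ) :
    (ALMseq σ₁ σ₂ σ₃ A B C n).1.IsPositive ∧ (ALMseq σ₁ σ₂ σ₃ A B C n).2.1.IsPositive ∧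
      (ALMseq σ₁ σ₂ σ₃ A B C n).2.2.IsPositive := by
  induction n with
  | zero => exact ⟨hA, hB, hC⟩
  | succ n ih =>
    obtain ⟨a, b, c⟩ := ih
    exact ⟨h₁.1 _ _ b c, h₂.1 _ _ c a, h₃.1 _ _ a b⟩

/-- Each finite stage of the ALM-sequence is downward continuous in the initial triple. -/
theorem alm_downTo {σ₁ σ₂ σ₃ : (H →L[ℂ] H) → (H →L[ℂ] H) → (H →L[ℂ] H)}
    (h₁ : KuboAndo σ₁) (h₂ : KuboAndo σ₂) (h₃ : KuboAndo σ₃)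
    {As Bs Cs : ℕ → H →L[ℂ] H} {A B C : H →L[ℂ] H}
    (hAs : ∀ k, (As k).IsPositive) (hBs : ∀ k, (Bs k).IsPositive)
    (hCs : ∀ k, (Cs k).IsPositive)
    (hA : A.IsPositive) (hB : B.IsPositive) (hC : C.IsPositive)
    (hdA : DownTo As A) (hdB : DownTo Bs B) (hdC : DownTo Cs C) (n : ℕ) :
    DownTo (fun k => (ALMseq σ₁ σ₂ σ₃ (As k) (Bs k) (Cs k) n).1)
        (ALMseq σ₁ σ₂ σ₃ A B C n).1 ∧
      DownTo (fun k => (ALMseq σ₁ σ₂ σ₃ (As k) (Bs k) (Cs k) n).2.1)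
        (ALMseq σ₁ σ₂ σ₃ A B C n).2.1 ∧
      DownTo (fun k => (ALMseq σ₁ σ₂ σ₃ (As k) (Bs k) (Cs k) n).2.2)
        (ALMseq σ₁ σ₂ σ₃ A B C n).2.2 := by
  induction n with
  | zero => exact ⟨hdA, hdB, hdC⟩
  | succ n ih =>
    obtain ⟨da, db, dc⟩ := ih
    have hp := fun k => alm_pos h₁ h₂ h₃ (hAs k) (hBs k) (hCs k) n
    obtain ⟨a, b, c⟩ := alm_pos h₁ h₂ h₃ hA hB hC n
    exact ⟨h₁.2.2.2.1 _ _ _ _ (fun k => (hp k).2.1) (fun k => (hp k).2.2) b c db dc,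
      h₂.2.2.2.1 _ _ _ _ (fun k => (hp k).2.2) (fun k => (hp k).1) c a dc da,
      h₃.2.2.2.1 _ _ _ _ (fun k => (hp k).1) (fun k => (hp k).2.1) a b da db⟩

theorem re_combo (A B : H →L[ℂ] H) (a b : ℝ) (x : H) :
    (((a : ℝ) : ℂ) • A + ((b : ℝ) : ℂ) • B).reApplyInnerSelf x =
      a * A.reApplyInnerSelf x + b * B.reApplyInnerSelf x := by
  rw [reApplyInnerSelf_apply, reApplyInnerSelf_apply, reApplyInnerSelf_apply, add_apply,
    smul_apply, smul_apply, inner_add_left, inner_smul_left, inner_smul_left]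
  simp

/-- The quadratic form at `x` of `p A + q B + s C`, where `t = (A, B, C)`. -/
noncomputable def weighted (p q s : ℝ) (t : (H →L[ℂ] H) × (H →L[ℂ] H) × (H →L[ℂ] H)) (x : H) : ℝ :=
  p * t.1.reApplyInnerSelf x + q * t.2.1.reApplyInnerSelf x + s * t.2.2.reApplyInnerSelf x

/-- The three equations say that `(p, q, s)` is stationary for the stochastic matrix of the
dominating arithmetic recursion; the weighted sum is then non-increasing along the
ALM-sequence. -/
theorem weighted_step {σ₁ σ₂ σ₃ : (H →L[ℂ] H) → (H →L[ℂ] H) → (H →L[ℂ] H)}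
    (h₁ : KuboAndo σ₁) (h₂ : KuboAndo σ₂) (h₃ : KuboAndo σ₃) {r₁ r₂ r₃ : ℝ}
    (hdom : ∀ A B : H →L[ℂ] H, A.IsPositive → B.IsPositive →
      OpLE (σ₁ A B) (((1 - r₁ : ℝ) : ℂ) • A + ((r₁ : ℝ) : ℂ) • B) ∧
      OpLE (σ₂ A B) (((1 - r₂ : ℝ) : ℂ) • A + ((r₂ : ℝ) : ℂ) • B) ∧
      OpLE (σ₃ A B) (((1 - r₃ : ℝ) : ℂ) • A + ((r₃ : ℝ) : ℂ) • B))
    {p q s : ℝ} (hp : 0 ≤ p) (hq : 0 ≤ q) (hs : 0 ≤ s)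
    (ep : q * r₂ + s * (1 - r₃) = p) (eq : p * (1 - r₁) + s * r₃ = q)
    (es : p * r₁ + q * (1 - r₂) = s) {A B C : H →L[ℂ] H}
    (hA : A.IsPositive) (hB : B.IsPositive) (hC : C.IsPositive) (x : H) (n : ℕ) :
    weighted p q s (ALMseq σ₁ σ₂ σ₃ A B C (n + 1)) x ≤
      weighted p q s (ALMseq σ₁ σ₂ σ₃ A B C n) x := by
  obtain ⟨a, b, c⟩ := alm_pos h₁ h₂ h₃ hA hB hC n
  simp only [weighted, ALMseq]
  generalize ALMseq σ₁ σ₂ σ₃ A B C n = t at *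
  have i₁ := (hdom _ _ b c).1.re_le x
  have i₂ := (hdom _ _ c a).2.1.re_le x
  have i₃ := (hdom _ _ a b).2.2.re_le x
  rw [re_combo] at i₁ i₂ i₃
  have j₁ := mul_le_mul_of_nonneg_left i₁ hp
  have j₂ := mul_le_mul_of_nonneg_left i₂ hq
  have j₃ := mul_le_mul_of_nonneg_left i₃ hs
  linear_combination j₁ + j₂ + j₃ + t.1.reApplyInnerSelf x * ep +
    t.2.1.reApplyInnerSelf x * eq + t.2.2.reApplyInnerSelf x * es

/-- Downward continuity of the ALM mean `S(A,B,C)`: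
if `A⁽ᵏ⁾ ↓ A`, `B⁽ᵏ⁾ ↓ B`, `C⁽ᵏ⁾ ↓ C` in `B(H)₊`, then
`S(A⁽ᵏ⁾,B⁽ᵏ⁾,C⁽ᵏ⁾) ↓ S(A,B,C)`. -/
theorem stmt_8
    (σ₁ σ₂ σ₃ : (H →L[ℂ] H) → (H →L[ℂ] H) → (H →L[ℂ] H))
    (hKA₁ : KuboAndo σ₁) (hKA₂ : KuboAndo σ₂) (hKA₃ : KuboAndo σ₃)
    (r₁ r₂ r₃ : ℝ) (hr₁ : r₁ ∈ Set.Ioo (0:ℝ) 1) (hr₂ : r₂ ∈ Set.Ioo (0:ℝ) 1)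
    (hr₃ : r₃ ∈ Set.Ioo (0:ℝ) 1)
    (hdom : ∀ A B : H →L[ℂ] H, A.IsPositive → B.IsPositive →
      OpLE (σ₁ A B) (((1 - r₁ : ℝ) : ℂ) • A + ((r₁ : ℝ) : ℂ) • B) ∧
      OpLE (σ₂ A B) (((1 - r₂ : ℝ) : ℂ) • A + ((r₂ : ℝ) : ℂ) • B) ∧
      OpLE (σ₃ A B) (((1 - r₃ : ℝ) : ℂ) • A + ((r₃ : ℝ) : ℂ) • B))
    (hsc : (StrictConc σ₁ r₁ ∧ StrictConc σ₂ r₂) ∨ (StrictConc σ₂ r₂ ∧ StrictConc σ₃ r₃) ∨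
      (StrictConc σ₁ r₁ ∧ StrictConc σ₃ r₃))
    (S : (H →L[ℂ] H) → (H →L[ℂ] H) → (H →L[ℂ] H) → (H →L[ℂ] H))
    (hS : ∀ A B C : H →L[ℂ] H, A.IsPositive → B.IsPositive → C.IsPositive →
      (S A B C).IsPositive ∧ IsWeakALMLimit σ₁ σ₂ σ₃ A B C (S A B C))
    (As Bs Cs : ℕ → H →L[ℂ] H) (A B C : H →L[ℂ] H)
    (hAs : ∀ k, (As k).IsPositive) (hBs : ∀ k, (Bs k).IsPositive)
    (hCs : ∀ k, (Cs k).IsPositive)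
    (hA : A.IsPositive) (hB : B.IsPositive) (hC : C.IsPositive)
    (hdA : DownTo As A) (hdB : DownTo Bs B) (hdC : DownTo Cs C) :
    DownTo (fun k => S (As k) (Bs k) (Cs k)) (S A B C) := by
  -- a stationary vector, from the cross product of two rows of the stationarity equations
  obtain ⟨p, q, s, hp, hq, hs, ep, eq, es⟩ : ∃ p q s : ℝ, 0 < p ∧ 0 < q ∧ 0 < s ∧
      q * r₂ + s * (1 - r₃) = p ∧ p * (1 - r₁) + s * r₃ = q ∧ p * r₁ + q * (1 - r₂) = s := by
    obtain ⟨a₁, b₁⟩ := hr₁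
    obtain ⟨a₂, b₂⟩ := hr₂
    obtain ⟨a₃, b₃⟩ := hr₃
    refine ⟨r₂ * r₃ + (1 - r₃), (1 - r₃) * (1 - r₁) + r₃, 1 - r₂ * (1 - r₁),
      ?_, ?_, ?_, by ring, by ring, by ring⟩ <;>
    nlinarith [mul_pos a₂ a₃, mul_pos a₁ a₂, mul_pos (sub_pos.2 b₃) (sub_pos.2 b₁)]
  have hm : 0 < p + q + s := by positivity
  have hwlim : ∀ A B C : H →L[ℂ] H, A.IsPositive → B.IsPositive → C.IsPositive → ∀ x,
      Tendsto (fun n => weighted p q s (ALMseq σ₁ σ₂ σ₃ A B C n) x) atTop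
        (𝓝 ((p + q + s) * (S A B C).reApplyInnerSelf x)) := fun A B C hA hB hC x => by
    obtain ⟨l₁, l₂, l₃⟩ := (hS A B C hA hB hC).2
    rw [show (p + q + s) * (S A B C).reApplyInnerSelf x = p * (S A B C).reApplyInnerSelf x +
      q * (S A B C).reApplyInnerSelf x + s * (S A B C).reApplyInnerSelf x by ring]
    exact (((l₁ x).const_mul p).add ((l₂ x).const_mul q)).add ((l₃ x).const_mul s)
  have hwle : ∀ A B C : H →L[ℂ] H, A.IsPositive → B.IsPositive → C.IsPositive → ∀ x n,
      (p + q + s) * (S A B C).reApplyInnerSelf x ≤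
        weighted p q s (ALMseq σ₁ σ₂ σ₃ A B C n) x := fun A B C hA hB hC x n =>
    (antitone_nat_of_succ_le (weighted_step hKA₁ hKA₂ hKA₃ hdom hp.le hq.le hs.le ep eq es
      hA hB hC x)).le_of_tendsto (hwlim A B C hA hB hC x) n
  have hD := alm_downTo hKA₁ hKA₂ hKA₃ hAs hBs hCs hA hB hC hdA hdB hdC
  have hlow : ∀ k x, (S A B C).reApplyInnerSelf x ≤
      (S (As k) (Bs k) (Cs k)).reApplyInnerSelf x := fun k x =>
    le_of_tendsto_of_tendsto' ((hS A B C hA hB hC).2.1 x)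
      ((hS _ _ _ (hAs k) (hBs k) (hCs k)).2.1 x) fun n => (hD n).1.re_le x k
  refine downTo_of_weak (fun k => (hS _ _ _ (hAs k) (hBs k) (hCs k)).1) (hS A B C hA hB hC).1
    (fun k x => le_of_tendsto_of_tendsto' ((hS _ _ _ (hAs (k + 1)) (hBs (k + 1))
      (hCs (k + 1))).2.1 x) ((hS _ _ _ (hAs k) (hBs k) (hCs k)).2.1 x)
      fun n => ((hD n).1.1 k).re_le x) hlow fun x => ?_
  refine tendsto_order.2 ⟨fun a ha => Eventually.of_forall fun k => ha.trans_le (hlow k x),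
    fun a ha => ?_⟩
  obtain ⟨n, hn⟩ := ((hwlim A B C hA hB hC x).eventually_lt_const
    (mul_lt_mul_of_pos_left ha hm)).exists
  have hk : Tendsto (fun k => weighted p q s (ALMseq σ₁ σ₂ σ₃ (As k) (Bs k) (Cs k) n) x) atTop
      (𝓝 (weighted p q s (ALMseq σ₁ σ₂ σ₃ A B C n) x)) :=
    ((((hD n).1.re_tendsto x).const_mul p).add (((hD n).2.1.re_tendsto x).const_mul q)).add
      (((hD n).2.2.re_tendsto x).const_mul s)
  filter_upwards [hk.eventually_lt_const hn] with k hk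
  exact lt_of_mul_lt_mul_left
    ((hwle _ _ _ (hAs k) (hBs k) (hCs k) x n).trans_lt hk) hm.le
end

section
/- Let H be a complex Hilbert space, let σ_1, σ_2, σ_3 be binary operations on B(H)_+ each satisfying the four Kubo–Ando axioms, and let r_1, r_2, r_3 ∈ (0,1). Assume A σ_k B ≤ (1−r_k)A + r_k B for all A, B ∈ B(H)_+ and all k; for at least two indices k, for all real α, β ≥ 0, ((1−r_k)α + r_k β)·I ≤ (αI) σ_k (βI) implies α = β; and for all invertible A, B ∈ B(H)_+ and all k, ((1−r_k)A^{−1} + r_k B^{−1})^{−1} ≤ A σ_k B. Let (p_1,p_2,p_3) ∈ (0,1)^3 be the stationary probability vector for (r_1,r_2,r_3). Then for all invertible A, B, C ∈ B(H)_+, the ALM-sequence from (A,B,C) with (σ_1,σ_2,σ_3) converges weakly to a common limit S, and (p_1 A^{−1} + p_2 B^{−1} + p_3 C^{−1})^{−1} ≤ S ≤ p_1 A + p_2 B + p_3 C. -/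
open Filter Topology ContinuousLinearMap

variable {H : Type*} [NormedAddCommGroup H] [InnerProductSpace ℂ H] [CompleteSpace H]

/-!
The iteration is controlled by two monotone sequences. By stationarity of `p`, replacing `(A, B, C)`
by the three weighted arithmetic means does not change `p₁A + p₂B + p₃C`. Since each `σₖ` lies below
the arithmetic mean and above the harmonic mean, `Mₙ = p₁Aₙ + p₂Bₙ + p₃Cₙ` decreases, and so does
`Wₙ = p₁Aₙ⁻¹ + p₂Bₙ⁻¹ + p₃Cₙ⁻¹` (`weighted_step`, `inverse_step`). Hence `Mₙ` has a strong limit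
`S ≤ M₀` (`exists_strong_limit`), and `W₀⁻¹ ≤ Wₙ⁻¹ ≤ Mₙ` (`harmonic_le_arithmetic`) gives `W₀⁻¹ ≤ S`.

The decrements `Mₙ - Mₙ₊₁` are the `p`-weighted sums of the three gaps between the arithmetic means
and the `σₖ`, so every gap tends to zero weakly. What remains is a quantitative form of strict
concavity (`pair_gap`): for `m ≤ A, B ≤ K` and every `ε > 0`,
`|⟨(B - A) x, x⟩| ≤ ε ⟨A x, x⟩ + M ⟨((1 - r) A + r B - A σ B) x, x⟩`, with `M` depending only on
`ε, m, K`. It forces two of the three differences between `Aₙ`, `Bₙ`, `Cₙ` to vanish weakly, and then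
all three converge to the limit of `Mₙ`.

By the transformer inequality it suffices to treat the pair `(1, X)`. A projection commuting with `X`
commutes with `1 σ X` (`KA_commute`), so the estimate may be proved on spectral pieces of `X`. On a
piece near a scalar `c ≠ 1`, monotonicity and homogeneity compare `1 σ X` with the scalar `1 σ c`,
which strict concavity places strictly below `1 - r + r c`; on a piece near `1` the form of `X - 1`
is itself small (`gapBound_local`). Compactness of `[m / K, K / m]` leaves finitely many pieces,
which are glued along spectral projections (`gapBound_Icc`). Thus `σ` need not be represented as an
operator mean by a functional calculus.
-/

set_option linter.unusedSectionVars false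

/-! ### Quadratic forms and the Loewner order

`T.reApplyInnerSelf x` is the real quadratic form `Re ⟨T x, x⟩`; lemmas about it are prefixed `qf`. -/

lemma qf_add (A B : H →L[ℂ] H) (x : H) :
    (A + B).reApplyInnerSelf x = A.reApplyInnerSelf x + B.reApplyInnerSelf x := by
  simp [reApplyInnerSelf_apply, inner_add_left]

lemma qf_sub (A B : H →L[ℂ] H) (x : H) :
    (A - B).reApplyInnerSelf x = A.reApplyInnerSelf x - B.reApplyInnerSelf x := by
  simp [reApplyInnerSelf_apply, inner_sub_left]

lemma qf_smul (c : ℝ) (A : H →L[ℂ] H) (x : H) :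
    ((c : ℂ) • A).reApplyInnerSelf x = c * A.reApplyInnerSelf x := by
  rw [reApplyInnerSelf_apply, smul_apply, inner_smul_left, Complex.conj_ofReal,
    RCLike.re_eq_complex_re, Complex.re_ofReal_mul]
  rfl

lemma qf_one (x : H) : (1 : H →L[ℂ] H).reApplyInnerSelf x = ‖x‖ ^ 2 := by
  rw [reApplyInnerSelf_apply, one_apply_eq_self, inner_self_eq_norm_sq]

lemma qf_nonneg {A : H →L[ℂ] H} (hA : 0 ≤ A) (x : H) : 0 ≤ A.reApplyInnerSelf x :=
  ((nonneg_iff_isPositive A).1 hA).2 x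

lemma qf_mono {A B : H →L[ℂ] H} (h : A ≤ B) (x : H) :
    A.reApplyInnerSelf x ≤ B.reApplyInnerSelf x := by
  have := qf_nonneg (sub_nonneg.2 h) x
  rw [qf_sub] at this
  linarith

lemma le_of_qf {A B : H →L[ℂ] H} (hA : IsSelfAdjoint A) (hB : IsSelfAdjoint B)
    (h : ∀ x, A.reApplyInnerSelf x ≤ B.reApplyInnerSelf x) : A ≤ B := by
  rw [ContinuousLinearMap.le_def, isPositive_def']
  refine ⟨hB.sub hA, fun x => ?_⟩
  rw [qf_sub]
  linarith [h x]

lemma qf_conj {T : H →L[ℂ] H} (hT : IsSelfAdjoint T) (A : H →L[ℂ] H) (x : H) :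
    (T * (A * T)).reApplyInnerSelf x = A.reApplyInnerSelf (T x) := by
  have h := (isSelfAdjoint_iff_isSymmetric.1 hT) (A (T x)) x
  simp only [coe_coe] at h
  simp [reApplyInnerSelf_apply, mul_apply_eq_comp, h]

lemma scalar_nonneg {c : ℝ} (hc : 0 ≤ c) : (0 : H →L[ℂ] H) ≤ (c : ℂ) • (1 : H →L[ℂ] H) := by
  rw [nonneg_iff_isPositive]
  exact isPositive_one.smul_of_nonneg (by exact_mod_cast hc)

lemma scalar_sa (c : ℝ) : IsSelfAdjoint ((c : ℂ) • (1 : H →L[ℂ] H)) := by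
  rw [isSelfAdjoint_iff]
  simp

lemma smul_sa (c : ℝ) {A : H →L[ℂ] H} (hA : IsSelfAdjoint A) : IsSelfAdjoint ((c : ℂ) • A) := by
  rw [isSelfAdjoint_iff] at *
  simp [hA]

/-- Cauchy–Schwarz for the form of a positive operator: `‖T x‖² ≤ ‖T‖ ⟨T x, x⟩`. -/
lemma norm_sq_le_qf {T : H →L[ℂ] H} (hT : 0 ≤ T) (x : H) :
    ‖T x‖ ^ 2 ≤ ‖T‖ * T.reApplyInnerSelf x := by
  have hs : IsSelfAdjoint (CFC.sqrt T) := (CFC.sqrt_nonneg T).isSelfAdjoint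
  have h1 : ∀ y, ‖CFC.sqrt T y‖ ^ 2 = T.reApplyInnerSelf y := fun y => by
    rw [← qf_one, ← qf_conj hs, one_mul, CFC.sqrt_mul_sqrt_self T hT]
  have h2 : ‖CFC.sqrt T‖ ^ 2 = ‖T‖ := by
    have := CStarRing.norm_star_mul_self (x := CFC.sqrt T)
    rw [hs.star_eq, CFC.sqrt_mul_sqrt_self T hT] at this
    rw [this, sq]
  calc ‖T x‖ ^ 2 = ‖CFC.sqrt T (CFC.sqrt T x)‖ ^ 2 := by
        conv_lhs => rw [← CFC.sqrt_mul_sqrt_self T hT]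
        rfl
    _ ≤ (‖CFC.sqrt T‖ * ‖CFC.sqrt T x‖) ^ 2 := by
        gcongr
        exact le_opNorm _ _
    _ = _ := by rw [mul_pow, h1, h2]

lemma apply_eq_zero_of_qf {T : H →L[ℂ] H} (hT : 0 ≤ T) {x : H}
    (h : T.reApplyInnerSelf x = 0) : T x = 0 := by
  have := norm_sq_le_qf hT x
  rw [h, mul_zero] at this
  simpa using this

/-! ### Strong limits and spectral projections -/

/-- A decreasing sequence of positive operators converges strongly. -/
lemma exists_strong_limit {M : ℕ → H →L[ℂ] H} (hpos : ∀ n, 0 ≤ M n) (hM : Antitone M) :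
    ∃ S : H →L[ℂ] H, ∀ x, Tendsto (fun n => M n x) atTop (𝓝 (S x)) := by
  have key : ∀ x, CauchySeq (fun n => M n x) := by
    intro x
    have hqa : Antitone (fun n => (M n).reApplyInnerSelf x) := fun m n h => qf_mono (hM h) x
    have hqc := (tendsto_atTop_ciInf hqa ⟨0, by rintro _ ⟨n, rfl⟩; exact qf_nonneg (hpos n) x⟩)
    have hqc := hqc.cauchySeq
    rw [Metric.cauchySeq_iff'] at hqc ⊢
    intro ε hε
    have hK : 0 < ‖M 0‖ + 1 := by positivity
    obtain ⟨N, hN⟩ := hqc (ε ^ 2 / (‖M 0‖ + 1)) (by positivity)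
    refine ⟨N, fun n hn => ?_⟩
    have h0 : 0 ≤ M N - M n := sub_nonneg.2 (hM hn)
    have h1 := norm_sq_le_qf h0 x
    have h2 : ‖M N - M n‖ ≤ ‖M 0‖ :=
      CStarAlgebra.norm_le_norm_of_nonneg_of_le h0
        ((sub_le_self _ (hpos n)).trans (hM (Nat.zero_le _)))
    have h3 := hN n hn
    rw [Real.dist_eq, abs_sub_comm, ← qf_sub, abs_of_nonneg (qf_nonneg h0 x)] at h3
    rw [lt_div_iff₀ hK] at h3
    rw [dist_comm, dist_eq_norm, ← sub_apply]
    refine lt_of_pow_lt_pow_left₀ 2 hε.le ?_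
    nlinarith [qf_nonneg h0 x]
  choose f hf using fun x => cauchySeq_tendsto_of_complete (key x)
  exact ⟨continuousLinearMapOfTendsto (l := atTop) M (f := f) (tendsto_pi_nhds.2 hf), hf⟩

/-- A projection compressing a self-adjoint operator below itself commutes with it: `G - E G E ≥ 0` has
zero form on the range of `E`, hence vanishes there. -/
lemma commute_of_conj_le {E G : H →L[ℂ] H} (hE : IsStarProjection E) (hG : IsSelfAdjoint G)
    (h : E * (G * E) ≤ G) : Commute E G := by
  have hEE : E * E = E := hE.isIdempotentElem
  have hZ := sub_nonneg.2 h
  have h1 : (G - E * (G * E)) * E = 0 := by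
    ext y
    change (G - E * (G * E)) (E y) = 0
    refine apply_eq_zero_of_qf hZ ?_
    rw [qf_sub, qf_conj hE.isSelfAdjoint, ← mul_apply_eq_comp, hEE, sub_self]
  have h2 : G * E = E * (G * E) := by
    rw [sub_mul, mul_assoc, mul_assoc, hEE, sub_eq_zero] at h1
    exact h1
  have h3 := congrArg star h2
  simp only [star_mul, hE.isSelfAdjoint.star_eq, hG.star_eq] at h3
  rw [commute_iff_eq, h3, h2, mul_assoc]

/-- Spectral projection of a self-adjoint operator for the half-line above `m`, obtained as the
projection onto the orthogonal complement of the kernel of the positive part of `X - m`. -/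
lemma exists_spectral_proj {X : H →L[ℂ] H} (hX : IsSelfAdjoint X) (m : ℝ) :
    ∃ E : H →L[ℂ] H, IsStarProjection E ∧
      (∀ P, IsSelfAdjoint P → Commute P X → Commute P E) ∧
      (∀ y, m * ‖E y‖ ^ 2 ≤ X.reApplyInnerSelf (E y)) ∧
      (∀ y, X.reApplyInnerSelf ((1 - E) y) ≤ m * ‖(1 - E) y‖ ^ 2) := by
  set Y : H →L[ℂ] H := X - (m : ℂ) • 1 with hY
  have hYsa : IsSelfAdjoint Y := hX.sub (scalar_sa m)
  have hdec : Y⁺ - Y⁻ = Y := CFC.posPart_sub_negPart Y hYsa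
  have hmul : Y⁺ * Y⁻ = 0 := CFC.posPart_mul_negPart Y
  have hpp : 0 ≤ Y⁺ := CFC.posPart_nonneg Y
  have hnn : 0 ≤ Y⁻ := CFC.negPart_nonneg Y
  have hXq : ∀ z, X.reApplyInnerSelf z = Y⁺.reApplyInnerSelf z - Y⁻.reApplyInnerSelf z
      + m * ‖z‖ ^ 2 := fun z => by
    rw [← qf_sub, hdec, hY, qf_sub, qf_smul, qf_one]; ring
  set N : Submodule ℂ H := (Y⁺).ker with hN
  have : CompleteSpace N := (ContinuousLinearMap.isClosed_ker (Y⁺)).completeSpace_coe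
  have hmem : ∀ z, z ∈ N ↔ Y⁺ z = 0 := fun z => LinearMap.mem_ker
  refine ⟨1 - N.starProjection, (isStarProjection_starProjection).one_sub, ?_, ?_, ?_⟩
  · intro P hP hPX
    have hPY : Commute P Y := hPX.sub_right ((Commute.one_right P).smul_right _)
    have hPp : Commute Y⁺ P := by
      rw [CFC.posPart_def]
      exact hPY.symm.cfcₙ_real _
    have hinv : ∀ z ∈ N, P z ∈ N := by
      intro z hz
      rw [hmem] at hz ⊢
      rw [← mul_apply_eq_comp, hPp.eq, mul_apply_eq_comp, hz, map_zero]
    have hcomp : N.starProjection * (P * N.starProjection) = P * N.starProjection := by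
      ext z
      simp only [mul_apply_eq_comp]
      exact Submodule.starProjection_eq_self_iff.2 (hinv _ (Submodule.starProjection_apply_mem _ _))
    have hsp : IsSelfAdjoint N.starProjection := (isStarProjection_starProjection).isSelfAdjoint
    have h3 := congrArg star hcomp
    simp only [star_mul, hP.star_eq, hsp.star_eq] at h3
    refine (Commute.one_right P).sub_right ?_
    rw [commute_iff_eq, ← h3, ← hcomp, mul_assoc]
  · intro y
    have h0 : Y⁻ ((1 - N.starProjection) y) = 0 := by
      have hv : (1 - N.starProjection) y ∈ Nᗮ := by
        exact Submodule.sub_starProjection_mem_orthogonal (K := N) y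
      refine ext_inner_left ℂ fun w => ?_
      have h := (isSelfAdjoint_iff_isSymmetric.1 hnn.isSelfAdjoint) w ((1 - N.starProjection) y)
      simp only [coe_coe] at h
      rw [← h, inner_zero_right]
      refine hv _ ?_
      rw [hmem, ← mul_apply_eq_comp, hmul]; rfl
    rw [hXq]
    have : Y⁻.reApplyInnerSelf ((1 - N.starProjection) y) = 0 := by
      rw [reApplyInnerSelf_apply, h0, inner_zero_left]; simp
    linarith [qf_nonneg hpp ((1 - N.starProjection) y)]
  · intro y
    rw [sub_sub_cancel, hXq]
    have h0 : Y⁺ (N.starProjection y) = 0 :=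
      (hmem _).1 (Submodule.starProjection_apply_mem _ _)
    have : Y⁺.reApplyInnerSelf (N.starProjection y) = 0 := by
      rw [reApplyInnerSelf_apply, h0, inner_zero_left]; simp
    linarith [qf_nonneg hnn (N.starProjection y)]


lemma op_smul_nonneg {c : ℝ} (hc : 0 ≤ c) {A : H →L[ℂ] H} (hA : 0 ≤ A) : 0 ≤ (c : ℂ) • A := by
  rw [nonneg_iff_isPositive] at *
  exact hA.smul_of_nonneg (by exact_mod_cast hc)

lemma op_smul_mono {c : ℝ} (hc : 0 ≤ c) {A B : H →L[ℂ] H} (h : A ≤ B) :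
    (c : ℂ) • A ≤ (c : ℂ) • B := by
  rw [← sub_nonneg, ← smul_sub]
  exact op_smul_nonneg hc (sub_nonneg.2 h)

/-- The form of `T` splits along a projection commuting with `T`. -/
lemma qf_split {E T : H →L[ℂ] H} (hE : IsStarProjection E) (hT : Commute E T) (y : H) :
    T.reApplyInnerSelf y = T.reApplyInnerSelf (E y) + T.reApplyInnerSelf ((1 - E) y) := by
  rw [← qf_conj hE.isSelfAdjoint, ← qf_conj hE.one_sub.isSelfAdjoint, ← qf_add]
  congr 1
  have h1 : E * (T * E) = T * E := by
    rw [← mul_assoc, hT.eq, mul_assoc, hE.isIdempotentElem.eq]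
  have h2 : (1 - E) * (T * (1 - E)) = T * (1 - E) := by
    rw [← mul_assoc, ((Commute.one_left T).sub_left hT).eq, mul_assoc,
      hE.one_sub.isIdempotentElem.eq]
  rw [h1, h2, mul_sub, mul_one, add_sub_cancel]

lemma conj_le_self {E X : H →L[ℂ] H} (hE : IsStarProjection E) (hX : 0 ≤ X) (h : Commute E X) :
    E * (X * E) ≤ X := by
  refine le_of_qf ?_ hX.isSelfAdjoint fun y => ?_
  · rw [isSelfAdjoint_iff]
    simp [hE.isSelfAdjoint.star_eq, hX.isSelfAdjoint.star_eq, mul_assoc]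
  · rw [qf_conj hE.isSelfAdjoint, qf_split hE h y]
    linarith [qf_nonneg hX ((1 - E) y)]

/-! ### Elementary consequences of the Kubo–Ando axioms -/

section KuboAndo

variable {σ : (H →L[ℂ] H) → (H →L[ℂ] H) → (H →L[ℂ] H)}

lemma KA_nonneg (h : KuboAndo σ) {A B : H →L[ℂ] H} (hA : 0 ≤ A) (hB : 0 ≤ B) : 0 ≤ σ A B :=
  (nonneg_iff_isPositive _).2
    (h.1 A B ((nonneg_iff_isPositive _).1 hA) ((nonneg_iff_isPositive _).1 hB))

lemma KA_mono (h : KuboAndo σ) {A B C D : H →L[ℂ] H} (hA : 0 ≤ A) (hB : 0 ≤ B)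
    (hAC : A ≤ C) (hBD : B ≤ D) : σ A B ≤ σ C D :=
  h.2.1 A B C D ((nonneg_iff_isPositive _).1 hA) ((nonneg_iff_isPositive _).1 hB)
    ((nonneg_iff_isPositive _).1 (hA.trans hAC)) ((nonneg_iff_isPositive _).1 (hB.trans hBD))
    hAC hBD

lemma KA_conj (h : KuboAndo σ) {A B T : H →L[ℂ] H} (hA : 0 ≤ A) (hB : 0 ≤ B) (hT : 0 ≤ T) :
    T * (σ A B * T) ≤ σ (T * (A * T)) (T * (B * T)) :=
  h.2.2.1 A B T ((nonneg_iff_isPositive _).1 hA) ((nonneg_iff_isPositive _).1 hB)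
    ((nonneg_iff_isPositive _).1 hT)

lemma scalar_conj {c : ℝ} (hc : 0 ≤ c) (A : H →L[ℂ] H) :
    ((√c : ℝ) : ℂ) • (1 : H →L[ℂ] H) * (A * (((√c : ℝ) : ℂ) • (1 : H →L[ℂ] H)))
      = (c : ℂ) • A := by
  simp [smul_smul, Real.mul_self_sqrt hc]

lemma KA_le_smul (h : KuboAndo σ) {c : ℝ} (hc : 0 ≤ c) {A B : H →L[ℂ] H} (hA : 0 ≤ A)
    (hB : 0 ≤ B) : (c : ℂ) • σ A B ≤ σ ((c : ℂ) • A) ((c : ℂ) • B) := by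
  have := KA_conj h hA hB (scalar_nonneg (H := H) (Real.sqrt_nonneg c))
  simpa only [scalar_conj hc] using this

/-- With `KA_le_smul` this is positive homogeneity: apply `KA_le_smul` with `c⁻¹`. -/
lemma KA_smul_le (h : KuboAndo σ) {c : ℝ} (hc : 0 < c) {A B : H →L[ℂ] H} (hA : 0 ≤ A)
    (hB : 0 ≤ B) : σ ((c : ℂ) • A) ((c : ℂ) • B) ≤ (c : ℂ) • σ A B := by
  have h0 : (c : ℂ) ≠ 0 := by exact_mod_cast hc.ne'
  have h1 := KA_le_smul h (inv_nonneg.2 hc.le) (op_smul_nonneg hc.le hA) (op_smul_nonneg hc.le hB)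
  have h2 := op_smul_mono hc.le h1
  simpa only [Complex.ofReal_inv, smul_smul, inv_mul_cancel₀ h0, mul_inv_cancel₀ h0, one_smul]
    using h2

lemma proj_le_one {E : H →L[ℂ] H} (hE : IsStarProjection E) : E ≤ 1 :=
  sub_nonneg.1 ((nonneg_iff_isPositive _).2 (IsPositive.of_isStarProjection hE.one_sub))

lemma proj_nonneg {E : H →L[ℂ] H} (hE : IsStarProjection E) : 0 ≤ E :=
  (nonneg_iff_isPositive _).2 (IsPositive.of_isStarProjection hE)

/-- A projection commuting with `X` commutes with `1 σ X`: the transformer inequality for `E` and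
monotonicity give `E (1 σ X) E ≤ E σ (E X E) ≤ 1 σ X`. -/
lemma KA_commute (h : KuboAndo σ) {E X : H →L[ℂ] H} (hE : IsStarProjection E) (hX : 0 ≤ X)
    (hEX : Commute E X) : Commute E (σ 1 X) := by
  refine commute_of_conj_le hE (KA_nonneg h zero_le_one hX).isSelfAdjoint ?_
  have hE0 := proj_nonneg hE
  refine (KA_conj h zero_le_one hX hE0).trans (KA_mono h ?_ ?_ ?_ (conj_le_self hE hX hEX))
  · rw [one_mul, hE.isIdempotentElem.eq]; exact hE0
  · have := star_left_conjugate_nonneg hX E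
    rwa [hE.isSelfAdjoint.star_eq, mul_assoc] at this
  · rw [one_mul, hE.isIdempotentElem.eq]; exact proj_le_one hE

/-- `1 σ (c • 1)` is a scalar, as it commutes with every rank-one projection. -/
lemma KA_scalar (h : KuboAndo σ) {c : ℝ} (hc : 0 ≤ c) :
    ∃ φ : ℝ, σ 1 ((c : ℂ) • 1) = (φ : ℂ) • (1 : H →L[ℂ] H) := by
  set F := σ 1 ((c : ℂ) • 1) with hF
  have hFsa : IsSelfAdjoint F := (KA_nonneg h zero_le_one (scalar_nonneg hc)).isSelfAdjoint
  obtain ⟨a, ha⟩ := LinearMap.exists_eq_smul_id_of_forall_notLinearIndependent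
    (f := (F : H →ₗ[ℂ] H)) (R := ℂ) (by
      intro v hv
      have hE := isStarProjection_starProjection (U := Submodule.span ℂ {v})
      have hcomm := KA_commute h hE (scalar_nonneg hc) ((Commute.one_right _).smul_right _)
      have h1 : (Submodule.span ℂ {v}).starProjection v = v :=
        Submodule.starProjection_eq_self_iff.2 (Submodule.mem_span_singleton_self v)
      have h2 : F v ∈ Submodule.span ℂ {v} := by
        refine Submodule.starProjection_eq_self_iff.1 ?_
        have := congrArg (fun T : H →L[ℂ] H => T v) hcomm.eq
        simp only [mul_apply_eq_comp, h1] at this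
        exact this
      obtain ⟨b, hb⟩ := Submodule.mem_span_singleton.1 h2
      have := LinearIndependent.pair_iff.1 hv b (-1) (by simp [hb])
      simp at this)
  have ha' : F = a • 1 := by
    ext v
    exact congrArg (fun T : H →ₗ[ℂ] H => T v) ha
  have ha2 : F = star a • 1 := by
    rw [← hFsa.star_eq, ha']; simp
  refine ⟨a.re, ?_⟩
  have h3 : (a.re : ℂ) = (2⁻¹ : ℂ) * a + 2⁻¹ * star a := by
    rw [Complex.re_eq_add_conj]
    simp only [RCLike.star_def]
    ring
  rw [h3, add_smul, mul_smul, mul_smul, ← ha', ← ha2, ← add_smul]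
  norm_num

end KuboAndo

/-! ### The gap between the arithmetic mean and `σ` -/

/-- The gap `1 ∇ᵣ X - 1 σ X` between the weighted arithmetic mean and `σ`. -/
def gap (σ : (H →L[ℂ] H) → (H →L[ℂ] H) → (H →L[ℂ] H)) (r : ℝ) (X : H →L[ℂ] H) : H →L[ℂ] H :=
  ((1 - r : ℝ) : ℂ) • (1 : H →L[ℂ] H) + ((r : ℝ) : ℂ) • X - σ 1 X

/-- On spectral pieces of any `X ≥ 0` over the interval `[s, t]`, the form of `X - 1` is bounded by
`ε` plus a multiple of the gap, with a constant uniform in `X`. A spectral piece is encoded by a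
projection `P` commuting with `X` on whose range `s ≤ X ≤ t`. -/
def GapBound (σ : (H →L[ℂ] H) → (H →L[ℂ] H) → (H →L[ℂ] H)) (r ε s t : ℝ) : Prop :=
  ∃ M : ℝ, 0 ≤ M ∧ ∀ X P : H →L[ℂ] H, 0 ≤ X → IsStarProjection P → Commute P X →
    (∀ y, s * ‖P y‖ ^ 2 ≤ X.reApplyInnerSelf (P y)) →
    (∀ y, X.reApplyInnerSelf (P y) ≤ t * ‖P y‖ ^ 2) →
    ∀ y, |X.reApplyInnerSelf (P y) - ‖P y‖ ^ 2| ≤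
      ε * ‖P y‖ ^ 2 + M * (gap σ r X).reApplyInnerSelf (P y)

section KuboAndo

variable {σ : (H →L[ℂ] H) → (H →L[ℂ] H) → (H →L[ℂ] H)} {r : ℝ}

lemma GapBound.mono {ε s t s' t' : ℝ} (h : GapBound σ r ε s t) (hs : s ≤ s') (ht : t' ≤ t) :
    GapBound σ r ε s' t' := by
  obtain ⟨M, hM, h⟩ := h
  refine ⟨M, hM, fun X P hX hP hc h1 h2 => h X P hX hP hc (fun y => ?_) (fun y => ?_)⟩
  · exact le_trans (by gcongr) (h1 y)
  · exact (h2 y).trans (by gcongr)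

lemma qf_gap (X : H →L[ℂ] H) (y : H) : (gap σ r X).reApplyInnerSelf y =
    (1 - r) * ‖y‖ ^ 2 + r * X.reApplyInnerSelf y - (σ 1 X).reApplyInnerSelf y := by
  rw [gap, qf_sub, qf_add, qf_smul, qf_smul, qf_one]

/-- Adjacent intervals are glued along a spectral projection of `X`. -/
lemma GapBound.glue (h : KuboAndo σ)
    (hdom : ∀ A B : H →L[ℂ] H, 0 ≤ A → 0 ≤ B →
      σ A B ≤ ((1 - r : ℝ) : ℂ) • A + ((r : ℝ) : ℂ) • B)
    {ε s m t : ℝ} (h1 : GapBound σ r ε s m) (h2 : GapBound σ r ε m t) :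
    GapBound σ r ε s t := by
  obtain ⟨M₁, hM₁, h1⟩ := h1
  obtain ⟨M₂, hM₂, h2⟩ := h2
  refine ⟨max M₁ M₂, le_max_of_le_left hM₁, fun X P hX hP hc hs ht y => ?_⟩
  obtain ⟨E, hE, hEc, hEl, hEu⟩ := exists_spectral_proj hX.isSelfAdjoint m
  have hXE : Commute E X := (hEc X hX.isSelfAdjoint (Commute.refl X)).symm
  have hPE : Commute P E := hEc P hP.isSelfAdjoint hc
  have hPE' : Commute P (1 - E) := (Commute.one_right P).sub_right hPE
  have hD0 : 0 ≤ gap σ r X := sub_nonneg.2 (hdom 1 X zero_le_one hX)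
  have hDE : Commute E (gap σ r X) :=
    (((Commute.one_right E).smul_right _).add_right (hXE.smul_right _)).sub_right
      (KA_commute h hE hX hXE)
  have e1 : E (P y) = (P * E) y := by rw [hPE.eq]; rfl
  have e2 : (1 - E) (P y) = (P * (1 - E)) y := by rw [hPE'.eq]; rfl
  have a1 := h1 X (P * (1 - E)) hX (hP.mul hE.one_sub hPE')
    (hc.mul_left ((Commute.one_left X).sub_left hXE)) (fun y => hs _)
    (fun y => by rw [hPE'.eq]; exact hEu _) y
  have a2 := h2 X (P * E) hX (hP.mul hE hPE) (hc.mul_left hXE)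
    (fun y => by rw [hPE.eq]; exact hEl _) (fun y => ht _) y
  have s0 := qf_split hE (Commute.one_right E) (P y)
  have s1 := qf_split hE hXE (P y)
  have s2 := qf_split hE hDE (P y)
  simp only [qf_one] at s0
  rw [e1, e2] at s0 s1 s2
  have n1 := qf_nonneg hD0 ((P * (1 - E)) y)
  have n2 := qf_nonneg hD0 ((P * E) y)
  have b1 := mul_le_mul_of_nonneg_right (le_max_left M₁ M₂) n1
  have b2 := mul_le_mul_of_nonneg_right (le_max_right M₁ M₂) n2
  rw [s0, s1, s2]
  rw [abs_le] at *
  constructor <;> linarith [a1.1, a1.2, a2.1, a2.2]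

/-- Near every `c > 0` a bound holds: near `c = 1` trivially, and near `c ≠ 1` because strict
concavity at the scalar `c` makes the gap bounded below on spectral pieces close to `c`. -/
lemma gapBound_local (h : KuboAndo σ) (hr : r ∈ Set.Ioo (0:ℝ) 1) (hsc : StrictConc σ r)
    {ε c : ℝ} (hε : 0 < ε) (hc : 0 < c) :
    ∃ θ : ℝ, 0 < θ ∧ GapBound σ r ε (c - θ) (c + θ) := by
  by_cases hc1 : c = 1
  · subst hc1
    refine ⟨ε, hε, 0, le_rfl, fun X P hX hP hcomm hs ht y => ?_⟩
    have := hs y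
    have := ht y
    rw [abs_le]
    constructor <;> linarith
  obtain ⟨φ, hφ⟩ := KA_scalar h hc.le
  have hgap : φ < 1 - r + r * c := by
    by_contra! hcon
    refine hc1 (hsc 1 c zero_le_one hc.le ?_).symm
    change (_ : H →L[ℂ] H) ≤ _
    rw [Complex.ofReal_one, one_smul, hφ, mul_one, ← sub_nonneg, ← sub_smul, ← Complex.ofReal_sub]
    exact scalar_nonneg (by linarith)
  set η := 1 - r + r * c - φ with hη
  have hη0 : 0 < η := by linarith
  obtain ⟨θ, hθ, hθη⟩ : ∃ θ : ℝ, 0 < θ ∧ θ * (r + |φ| / c) ≤ η / 2 := by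
    have : 0 < r + |φ| / c := by have := hr.1; positivity
    exact ⟨η / 2 / (r + |φ| / c), by positivity, by rw [div_mul_cancel₀ _ this.ne']⟩
  refine ⟨θ, hθ, (|c - 1| + θ) * (2 / η), by positivity, fun X P hX hP hcomm hs ht y => ?_⟩
  -- chosen so that `μ ≥ 1` and `μ * c = c + θ` bounds `X` on the range of `P`
  set μ : ℝ := 1 + θ / c with hμ
  have hμ1 : 1 ≤ μ := by have : 0 < θ / c := by positivity
                         linarith
  have hμc : μ * c = c + θ := by rw [hμ]; field_simp
  have hP0 := proj_nonneg hP
  have hPXP : 0 ≤ P * (X * P) := by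
    have := star_left_conjugate_nonneg hX P
    rwa [hP.isSelfAdjoint.star_eq, mul_assoc] at this
  -- monotonicity and homogeneity compare `P (1 σ X) P` with `μ • (1 σ c) = μ φ • 1`
  have key : P * (σ 1 X * P) ≤ ((μ * φ : ℝ) : ℂ) • (1 : H →L[ℂ] H) := by
    have k1 : P * (1 * P) ≤ (μ : ℂ) • (1 : H →L[ℂ] H) := by
      rw [one_mul, hP.isIdempotentElem.eq]
      refine (proj_le_one hP).trans ?_
      refine le_of_qf (IsSelfAdjoint.one _) (scalar_sa μ) fun z => ?_
      rw [qf_smul, qf_one]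
      nlinarith [sq_nonneg ‖z‖]
    have k2 : P * (X * P) ≤ (μ : ℂ) • ((c : ℂ) • (1 : H →L[ℂ] H)) := by
      refine le_of_qf hPXP.isSelfAdjoint (smul_sa _ (scalar_sa c)) fun z => ?_
      rw [qf_conj hP.isSelfAdjoint, qf_smul, qf_smul, qf_one, ← mul_assoc, hμc]
      refine (ht z).trans ?_
      have := qf_mono (proj_le_one hP) z
      have h3 : P.reApplyInnerSelf z = ‖P z‖ ^ 2 := by
        rw [← qf_one, ← qf_conj hP.isSelfAdjoint, one_mul, hP.isIdempotentElem.eq]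
      rw [h3, qf_one] at this
      gcongr
    have k0 : 0 ≤ P * (1 * P) := by rw [one_mul, hP.isIdempotentElem.eq]; exact hP0
    refine (KA_conj h zero_le_one hX hP0).trans ((KA_mono h k0 hPXP k1 k2).trans ?_)
    refine (KA_smul_le h (by linarith) zero_le_one (scalar_nonneg hc.le)).trans ?_
    rw [hφ, smul_smul, Complex.ofReal_mul]
  have k3 := qf_mono key (P y)
  have hPP : P (P y) = P y := by
    rw [← mul_apply_eq_comp, hP.isIdempotentElem.eq]
  rw [qf_conj hP.isSelfAdjoint, qf_smul, qf_one, hPP] at k3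
  have k4 := hs y
  have k5 := ht y
  have hgapl : η / 2 * ‖P y‖ ^ 2 ≤ (gap σ r X).reApplyInnerSelf (P y) := by
    rw [qf_gap]
    have k6 : r * ((c - θ) * ‖P y‖ ^ 2) ≤ r * X.reApplyInnerSelf (P y) :=
      mul_le_mul_of_nonneg_left k4 hr.1.le
    have k7 : η / 2 ≤ (1 - r) + r * (c - θ) - μ * φ := by
      have : θ / c * φ ≤ θ * (|φ| / c) := by
        rw [mul_div_assoc', div_mul_eq_mul_div]
        gcongr
        exact le_abs_self φ
      rw [hμ]
      nlinarith
    have k8 := mul_le_mul_of_nonneg_right k7 (sq_nonneg ‖P y‖)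
    linarith
  have k9 : |X.reApplyInnerSelf (P y) - ‖P y‖ ^ 2| ≤ (|c - 1| + θ) * ‖P y‖ ^ 2 := by
    have u1 := mul_le_mul_of_nonneg_right (le_abs_self (c - 1)) (sq_nonneg ‖P y‖)
    have u2 := mul_le_mul_of_nonneg_right (neg_abs_le (c - 1)) (sq_nonneg ‖P y‖)
    rw [abs_le]
    constructor <;> linarith
  have k10 : ‖P y‖ ^ 2 ≤ 2 / η * (gap σ r X).reApplyInnerSelf (P y) := by
    rw [div_mul_eq_mul_div, le_div_iff₀ hη0]
    linarith
  have k11 := mul_le_mul_of_nonneg_left k10 (show 0 ≤ |c - 1| + θ by positivity)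
  have k12 : 0 ≤ ε * ‖P y‖ ^ 2 := by positivity
  rw [mul_assoc]
  linarith

/-- By compactness, the local bounds glue to a bound on any compact interval in `(0, ∞)`. -/
lemma gapBound_Icc (h : KuboAndo σ) (hr : r ∈ Set.Ioo (0:ℝ) 1) (hsc : StrictConc σ r)
    (hdom : ∀ A B : H →L[ℂ] H, 0 ≤ A → 0 ≤ B →
      σ A B ≤ ((1 - r : ℝ) : ℂ) • A + ((r : ℝ) : ℂ) • B)
    {ε a b : ℝ} (hε : 0 < ε) (ha : 0 < a) (hab : a ≤ b) : GapBound σ r ε a b := by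
  choose θ hθ hQ using fun c : Set.Icc a b => gapBound_local h hr hsc hε (ha.trans_le c.2.1)
  obtain ⟨t, t0, tm, ⟨N, hN⟩, hsub⟩ := exists_monotone_Icc_subset_open_cover_Icc hab
    (c := fun i => Metric.ball i (θ i)) (fun i => Metric.isOpen_ball)
    (fun i _ => Set.mem_iUnion.2 ⟨i, Metric.mem_ball_self (hθ i)⟩)
  have step : ∀ n, GapBound σ r ε (t n) (t (n + 1)) := by
    intro n
    obtain ⟨i, hi⟩ := hsub n
    have h1 := hi (Set.left_mem_Icc.2 (tm (Nat.le_succ n)))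
    have h2 := hi (Set.right_mem_Icc.2 (tm (Nat.le_succ n)))
    rw [Metric.mem_ball, Subtype.dist_eq, Real.dist_eq, abs_lt] at h1 h2
    exact (hQ i).mono (by linarith [h1.1]) (by linarith [h2.2])
  have all : ∀ n, GapBound σ r ε (t 0) (t (n + 1)) := by
    intro n
    induction n with
    | zero => exact step 0
    | succ n ih => exact ih.glue h hdom (step (n + 1))
  have := all N
  rwa [t0, hN (N + 1) (Nat.le_succ N)] at this

end KuboAndo

/-! ### Strictly positive operators (prefix `sp`) -/

lemma sp_of_le {A B : H →L[ℂ] H} (h : IsStrictlyPositive A) (hAB : A ≤ B) : IsStrictlyPositive B :=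
  (CStarAlgebra.isUnit_of_le A hAB h).isStrictlyPositive (h.nonneg.trans hAB)

lemma sp_smul {c : ℝ} (hc : 0 < c) {A : H →L[ℂ] H} (h : IsStrictlyPositive A) :
    IsStrictlyPositive ((c : ℂ) • A) :=
  ((h.isUnit.smul (Units.mk0 (c : ℂ) (by exact_mod_cast hc.ne')))).isStrictlyPositive
    (op_smul_nonneg hc.le h.nonneg)

lemma sp_scalar {m : ℝ} (hm : 0 < m) : IsStrictlyPositive ((m : ℂ) • (1 : H →L[ℂ] H)) :=
  sp_smul hm (isUnit_one.isStrictlyPositive zero_le_one)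

lemma sp_add {A B : H →L[ℂ] H} (hA : IsStrictlyPositive A) (hB : 0 ≤ B) :
    IsStrictlyPositive (A + B) :=
  sp_of_le hA (le_add_of_nonneg_right hB)

/-- A strictly positive operator is bounded below: `‖x‖² ≤ ‖A⁻¹‖² ‖A x‖² ≤ ‖A⁻¹‖² ‖A‖ ⟨A x, x⟩`. -/
lemma exists_lower_bound {A : H →L[ℂ] H} (h : IsStrictlyPositive A) :
    ∃ m : ℝ, 0 < m ∧ (m : ℂ) • (1 : H →L[ℂ] H) ≤ A := by
  set c := ‖Ring.inverse A‖ ^ 2 * ‖A‖ + 1 with hc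
  have hc0 : 0 < c := by positivity
  refine ⟨c⁻¹, inv_pos.2 hc0, le_of_qf (scalar_sa _) h.nonneg.isSelfAdjoint fun x => ?_⟩
  rw [qf_smul, qf_one, inv_mul_le_iff₀ hc0]
  have h0 := qf_nonneg h.nonneg x
  calc ‖x‖ ^ 2 = ‖Ring.inverse A (A x)‖ ^ 2 := by
        rw [← mul_apply_eq_comp, Ring.inverse_mul_cancel _ h.isUnit, one_apply_eq_self]
    _ ≤ (‖Ring.inverse A‖ * ‖A x‖) ^ 2 := by gcongr; exact le_opNorm _ _
    _ = ‖Ring.inverse A‖ ^ 2 * ‖A x‖ ^ 2 := by ring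
    _ ≤ ‖Ring.inverse A‖ ^ 2 * (‖A‖ * A.reApplyInnerSelf x) := by
        gcongr; exact norm_sq_le_qf h.nonneg x
    _ ≤ c * A.reApplyInnerSelf x := by rw [hc]; linarith

lemma le_norm_smul {A : H →L[ℂ] H} (h : 0 ≤ A) {K : ℝ} (hK : ‖A‖ ≤ K) :
    A ≤ (K : ℂ) • (1 : H →L[ℂ] H) := by
  refine le_of_qf h.isSelfAdjoint (scalar_sa _) fun x => ?_
  rw [qf_smul, qf_one]
  calc A.reApplyInnerSelf x ≤ ‖A x‖ * ‖x‖ := re_inner_le_norm _ _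
    _ ≤ ‖A‖ * ‖x‖ * ‖x‖ := by gcongr; exact le_opNorm _ _
    _ ≤ K * ‖x‖ ^ 2 := by rw [mul_assoc, ← sq]; gcongr

/-- The square root `s` of a strictly positive `A` together with its positive inverse `T`. -/
lemma exists_sqrt_inverse {A : H →L[ℂ] H} (h : IsStrictlyPositive A) :
    ∃ s T : H →L[ℂ] H, 0 ≤ s ∧ 0 ≤ T ∧ s * s = A ∧ s * T = 1 ∧ T * s = 1 := by
  have hs0 : 0 ≤ CFC.sqrt A := CFC.sqrt_nonneg A
  have hu : IsUnit (CFC.sqrt A) := (CFC.isUnit_sqrt_iff A h.nonneg).2 h.isUnit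
  exact ⟨CFC.sqrt A, Ring.inverse (CFC.sqrt A), hs0, (hu.isStrictlyPositive hs0).ringInverse.nonneg,
    CFC.sqrt_mul_sqrt_self A h.nonneg, Ring.mul_inverse_cancel _ hu, Ring.inverse_mul_cancel _ hu⟩

/-! ### The gap inequality for pairs -/

/-- The gap inequality for a pair: reduction to `(1, X)` with `X = A^{-1/2} B A^{-1/2}` by the
transformer inequality. The constant depends only on the spectral bounds `m ≤ A, B ≤ K`. -/
lemma pair_gap {σ : (H →L[ℂ] H) → (H →L[ℂ] H) → (H →L[ℂ] H)} {r : ℝ}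
    (h : KuboAndo σ) (hr : r ∈ Set.Ioo (0:ℝ) 1) (hsc : StrictConc σ r)
    (hdom : ∀ A B : H →L[ℂ] H, 0 ≤ A → 0 ≤ B →
      σ A B ≤ ((1 - r : ℝ) : ℂ) • A + ((r : ℝ) : ℂ) • B)
    {m K ε : ℝ} (hm : 0 < m) (hmK : m ≤ K) (hε : 0 < ε) :
    ∃ M : ℝ, 0 ≤ M ∧ ∀ A B : H →L[ℂ] H, (m : ℂ) • (1 : H →L[ℂ] H) ≤ A →
      A ≤ (K : ℂ) • (1 : H →L[ℂ] H) → (m : ℂ) • (1 : H →L[ℂ] H) ≤ B →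
      B ≤ (K : ℂ) • (1 : H →L[ℂ] H) → ∀ x,
      |B.reApplyInnerSelf x - A.reApplyInnerSelf x| ≤ ε * A.reApplyInnerSelf x +
        M * ((1 - r) * A.reApplyInnerSelf x + r * B.reApplyInnerSelf x -
          (σ A B).reApplyInnerSelf x) := by
  have hK : 0 < K := hm.trans_le hmK
  have hab : m / K ≤ K / m := by
    rw [div_le_div_iff₀ hK hm]
    nlinarith
  obtain ⟨M, hM, hbound⟩ := gapBound_Icc h hr hsc hdom hε (div_pos hm hK) hab
  refine ⟨M, hM, fun A B hmA hAK hmB hBK x => ?_⟩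
  have hA : IsStrictlyPositive A := sp_of_le (sp_scalar hm) hmA
  have hB0 : 0 ≤ B := (scalar_nonneg hm.le).trans hmB
  obtain ⟨s, T, hs, hT, hss, hsT, hTs⟩ := exists_sqrt_inverse hA
  have hTsa := hT.isSelfAdjoint
  have hTA : T * (A * T) = 1 := by
    rw [← hss, mul_assoc s s T, hsT, mul_one, hTs]
  have hTs' : ∀ z, T (s z) = z := fun z => by rw [← mul_apply_eq_comp, hTs, one_apply_eq_self]
  have hsT' : ∀ z, s (T z) = z := fun z => by rw [← mul_apply_eq_comp, hsT, one_apply_eq_self]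
  have hnorm : ∀ y, ‖y‖ ^ 2 = A.reApplyInnerSelf (T y) := fun y => by
    rw [← qf_one y, ← hTA, qf_conj hTsa]
  have hX0 : 0 ≤ T * (B * T) := by
    have := star_left_conjugate_nonneg hB0 T
    rwa [hTsa.star_eq, mul_assoc] at this
  have b1 := fun z => qf_mono hmA z
  have b2 := fun z => qf_mono hAK z
  have b3 := fun z => qf_mono hmB z
  have b4 := fun z => qf_mono hBK z
  simp only [qf_smul, qf_one] at b1 b2 b3 b4
  have key := hbound (T * (B * T)) 1 hX0 (.one _) (Commute.one_left _)
    (fun y => by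
      rw [one_apply_eq_self, qf_conj hTsa, hnorm, div_mul_eq_mul_div, div_le_iff₀ hK]
      nlinarith [b2 (T y), b3 (T y), sq_nonneg ‖T y‖])
    (fun y => by
      rw [one_apply_eq_self, qf_conj hTsa, hnorm, div_mul_eq_mul_div, le_div_iff₀ hm]
      nlinarith [b1 (T y), b4 (T y), sq_nonneg ‖T y‖]) (s x)
  rw [one_apply_eq_self, qf_gap, qf_conj hTsa, hnorm, hTs'] at key
  have kc := qf_mono (KA_conj h hA.nonneg hB0 hT) (s x)
  rw [hTA, qf_conj hTsa, hTs'] at kc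
  refine key.trans ?_
  gcongr

/-! ### Harmonic and arithmetic means -/

/-- Young's inequality `2 Re ⟨u, v⟩ ≤ ⟨A u, u⟩ + ⟨A⁻¹ v, v⟩`, from `⟨A (u - A⁻¹ v), u - A⁻¹ v⟩ ≥ 0`. -/
lemma young_qf {A : H →L[ℂ] H} (hA : IsStrictlyPositive A) (u v : H) :
    2 * RCLike.re (inner ℂ u v) ≤
      A.reApplyInnerSelf u + (Ring.inverse A).reApplyInnerSelf v := by
  have h := qf_nonneg hA.nonneg (u - Ring.inverse A v)
  have e : A (Ring.inverse A v) = v := by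
    rw [← mul_apply_eq_comp, Ring.mul_inverse_cancel _ hA.isUnit, one_apply_eq_self]
  have s1 : inner ℂ (A u) (Ring.inverse A v) = inner ℂ u v := by
    have := (isSelfAdjoint_iff_isSymmetric.1 hA.nonneg.isSelfAdjoint) u (Ring.inverse A v)
    simp only [coe_coe] at this
    rw [this, e]
  rw [reApplyInnerSelf_apply, map_sub, e, inner_sub_left, inner_sub_right, inner_sub_right, s1] at h
  simp only [map_sub] at h
  rw [inner_re_symm v u, inner_re_symm v] at h
  rw [reApplyInnerSelf_apply, reApplyInnerSelf_apply]
  linarith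

/-- The weighted harmonic mean of three strictly positive operators is below the weighted
arithmetic mean `M`. With `W` the mean of the inverses and `z = W⁻¹ x`, averaging Young's inequality
for `(x, z)` gives `2 ⟨W⁻¹ x, x⟩ ≤ ⟨M x, x⟩ + ⟨W z, z⟩` and `⟨W z, z⟩ = ⟨W⁻¹ x, x⟩`. -/
lemma harmonic_le_arithmetic {A B C : H →L[ℂ] H} (hA : IsStrictlyPositive A)
    (hB : IsStrictlyPositive B) (hC : IsStrictlyPositive C) {p q r : ℝ} (hp : 0 < p) (hq : 0 < q)
    (hr : 0 < r) (hsum : p + q + r = 1) :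
    Ring.inverse ((p : ℂ) • Ring.inverse A + (q : ℂ) • Ring.inverse B + (r : ℂ) • Ring.inverse C) ≤
      (p : ℂ) • A + (q : ℂ) • B + (r : ℂ) • C := by
  have hW : IsStrictlyPositive
      ((p : ℂ) • Ring.inverse A + (q : ℂ) • Ring.inverse B + (r : ℂ) • Ring.inverse C) :=
    sp_add (sp_add (sp_smul hp hA.ringInverse) (sp_smul hq hB.ringInverse).nonneg)
      (sp_smul hr hC.ringInverse).nonneg
  have hM : 0 ≤ (p : ℂ) • A + (q : ℂ) • B + (r : ℂ) • C :=
    add_nonneg (add_nonneg (sp_smul hp hA).nonneg (sp_smul hq hB).nonneg) (sp_smul hr hC).nonneg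
  set W := (p : ℂ) • Ring.inverse A + (q : ℂ) • Ring.inverse B + (r : ℂ) • Ring.inverse C with hWdef
  refine le_of_qf hW.ringInverse.nonneg.isSelfAdjoint hM.isSelfAdjoint fun x => ?_
  set z := Ring.inverse W x with hz
  have hWz : W z = x := by
    rw [hz, ← mul_apply_eq_comp, Ring.mul_inverse_cancel _ hW.isUnit, one_apply_eq_self]
  have e1 : W.reApplyInnerSelf z = RCLike.re (inner ℂ x z) := by
    rw [reApplyInnerSelf_apply, hWz]
  have e2 : (Ring.inverse W).reApplyInnerSelf x = RCLike.re (inner ℂ x z) := by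
    rw [reApplyInnerSelf_apply, ← hz, inner_re_symm]
  rw [hWdef, qf_add, qf_add, qf_smul, qf_smul, qf_smul] at e1
  rw [e2, qf_add, qf_add, qf_smul, qf_smul, qf_smul]
  have y1 := mul_le_mul_of_nonneg_left (young_qf hA x z) hp.le
  have y2 := mul_le_mul_of_nonneg_left (young_qf hB x z) hq.le
  have y3 := mul_le_mul_of_nonneg_left (young_qf hC x z) hr.le
  have e3 : RCLike.re (inner ℂ x z) = (p + q + r) * RCLike.re (inner ℂ x z) := by rw [hsum, one_mul]
  linarith

/-! ### One step of the iteration -/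

section Step

variable {σ : (H →L[ℂ] H) → (H →L[ℂ] H) → (H →L[ℂ] H)} {r : ℝ}

/-- `σ` preserves the order interval `[m, K]`, since `σ m m ≥ m • (1 σ 1) = m`. -/
lemma KA_bounds (h : KuboAndo σ) (hr : r ∈ Set.Ioo (0:ℝ) 1)
    (hdom : ∀ A B : H →L[ℂ] H, 0 ≤ A → 0 ≤ B →
      σ A B ≤ ((1 - r : ℝ) : ℂ) • A + ((r : ℝ) : ℂ) • B)
    {m K : ℝ} (hm : 0 < m) {A B : H →L[ℂ] H}
    (hA : (m : ℂ) • (1 : H →L[ℂ] H) ≤ A ∧ A ≤ (K : ℂ) • (1 : H →L[ℂ] H))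
    (hB : (m : ℂ) • (1 : H →L[ℂ] H) ≤ B ∧ B ≤ (K : ℂ) • (1 : H →L[ℂ] H)) :
    (m : ℂ) • (1 : H →L[ℂ] H) ≤ σ A B ∧ σ A B ≤ (K : ℂ) • (1 : H →L[ℂ] H) := by
  have hm0 := scalar_nonneg (H := H) hm.le
  constructor
  · have := KA_le_smul h hm.le (zero_le_one (α := H →L[ℂ] H)) zero_le_one
    rw [h.2.2.2.2] at this
    exact this.trans (KA_mono h hm0 hm0 hA.1 hB.1)
  · refine (hdom A B (hm0.trans hA.1) (hm0.trans hB.1)).trans ?_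
    refine (add_le_add (op_smul_mono (by linarith [hr.2]) hA.2)
      (op_smul_mono hr.1.le hB.2)).trans_eq ?_
    rw [← add_smul, ← Complex.ofReal_add, sub_add_cancel, Complex.ofReal_one, one_smul]

/-- Domination of the weighted harmonic mean, inverted. -/
lemma inverse_step (hr : r ∈ Set.Ioo (0:ℝ) 1) {A B G : H →L[ℂ] H} (hA : IsStrictlyPositive A)
    (hB : IsStrictlyPositive B)
    (h : Ring.inverse (((1 - r : ℝ) : ℂ) • Ring.inverse A + ((r : ℝ) : ℂ) • Ring.inverse B) ≤ G) :
    Ring.inverse G ≤ ((1 - r : ℝ) : ℂ) • Ring.inverse A + ((r : ℝ) : ℂ) • Ring.inverse B := by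
  have hW := sp_add (sp_smul (sub_pos.2 hr.2) hA.ringInverse) (sp_smul hr.1 hB.ringInverse).nonneg
  have := CStarAlgebra.ringInverse_le_ringInverse h hW.ringInverse
  rwa [Ring.inverse_inverse hW.isUnit] at this

end Step

/-- Stationarity of `p`: one averaging step leaves the `p`-weighted mean unchanged. -/
lemma stationary_mean {r₁ r₂ r₃ p₁ p₂ p₃ : ℝ}
    (hstat₁ : p₁ = r₂ * p₂ + (1 - r₃) * p₃)
    (hstat₂ : p₂ = (1 - r₁) * p₁ + r₃ * p₃)
    (hstat₃ : p₃ = r₁ * p₁ + (1 - r₂) * p₂) (X Y Z : H →L[ℂ] H) :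
    (p₁ : ℂ) • (((1 - r₁ : ℝ) : ℂ) • Y + ((r₁ : ℝ) : ℂ) • Z) +
      (p₂ : ℂ) • (((1 - r₂ : ℝ) : ℂ) • Z + ((r₂ : ℝ) : ℂ) • X) +
      (p₃ : ℂ) • (((1 - r₃ : ℝ) : ℂ) • X + ((r₃ : ℝ) : ℂ) • Y) =
    (p₁ : ℂ) • X + (p₂ : ℂ) • Y + (p₃ : ℂ) • Z := by
  have h1 : (p₁ : ℂ) = ((r₂ * p₂ + (1 - r₃) * p₃ : ℝ) : ℂ) := congrArg _ hstat₁
  have h2 : (p₂ : ℂ) = (((1 - r₁) * p₁ + r₃ * p₃ : ℝ) : ℂ) := congrArg _ hstat₂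
  have h3 : (p₃ : ℂ) = ((r₁ * p₁ + (1 - r₂) * p₂ : ℝ) : ℂ) := congrArg _ hstat₃
  have e : (p₁ : ℂ) • (((1 - r₁ : ℝ) : ℂ) • Y + ((r₁ : ℝ) : ℂ) • Z) +
      (p₂ : ℂ) • (((1 - r₂ : ℝ) : ℂ) • Z + ((r₂ : ℝ) : ℂ) • X) +
      (p₃ : ℂ) • (((1 - r₃ : ℝ) : ℂ) • X + ((r₃ : ℝ) : ℂ) • Y) =
      ((r₂ * p₂ + (1 - r₃) * p₃ : ℝ) : ℂ) • X + (((1 - r₁) * p₁ + r₃ * p₃ : ℝ) : ℂ) • Y +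
      ((r₁ * p₁ + (1 - r₂) * p₂ : ℝ) : ℂ) • Z := by
    push_cast
    module
  rw [e, ← h1, ← h2, ← h3]

/-- Monotonicity of the `p`-weighted mean under one step dominated by the averaging step. -/
lemma weighted_step_s10 {r₁ r₂ r₃ p₁ p₂ p₃ : ℝ} (hp₁ : 0 < p₁) (hp₂ : 0 < p₂) (hp₃ : 0 < p₃)
    (hstat₁ : p₁ = r₂ * p₂ + (1 - r₃) * p₃)
    (hstat₂ : p₂ = (1 - r₁) * p₁ + r₃ * p₃)
    (hstat₃ : p₃ = r₁ * p₁ + (1 - r₂) * p₂) {X Y Z X' Y' Z' : H →L[ℂ] H}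
    (hX : X' ≤ ((1 - r₁ : ℝ) : ℂ) • Y + ((r₁ : ℝ) : ℂ) • Z)
    (hY : Y' ≤ ((1 - r₂ : ℝ) : ℂ) • Z + ((r₂ : ℝ) : ℂ) • X)
    (hZ : Z' ≤ ((1 - r₃ : ℝ) : ℂ) • X + ((r₃ : ℝ) : ℂ) • Y) :
    (p₁ : ℂ) • X' + (p₂ : ℂ) • Y' + (p₃ : ℂ) • Z' ≤
      (p₁ : ℂ) • X + (p₂ : ℂ) • Y + (p₃ : ℂ) • Z := by
  rw [← stationary_mean hstat₁ hstat₂ hstat₃ X Y Z]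
  exact add_le_add (add_le_add (op_smul_mono hp₁.le hX) (op_smul_mono hp₂.le hY))
    (op_smul_mono hp₃.le hZ)

/-! ### Limits -/

/-- A bound `|v - u| ≤ ε u + M D` for every `ε` (with `M` depending on `ε`), with `u` bounded and
`D → 0`, forces `v - u → 0`. -/
lemma tendsto_sub_of_gap {u v D : ℕ → ℝ} {L : ℝ} (hu : ∀ n, u n ≤ L) (hL : 0 ≤ L)
    (hD : Tendsto D atTop (𝓝 0))
    (h : ∀ ε > 0, ∃ M : ℝ, ∀ n, |v n - u n| ≤ ε * u n + M * D n) :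
    Tendsto (fun n => v n - u n) atTop (𝓝 0) := by
  rw [Metric.tendsto_nhds]
  intro δ hδ
  obtain ⟨M, hM⟩ := h (δ / (2 * (L + 1))) (by positivity)
  have h1 : Tendsto (fun n => M * D n) atTop (𝓝 0) := by simpa using hD.const_mul M
  filter_upwards [(tendsto_order.1 h1).2 (δ / 2) (by positivity)] with n hn
  rw [Real.dist_eq, sub_zero]
  have h2 : δ / (2 * (L + 1)) * u n ≤ δ / 2 := by
    calc δ / (2 * (L + 1)) * u n ≤ δ / (2 * (L + 1)) * (L + 1) := by
          gcongr
          linarith [hu n]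
      _ = δ / 2 := by field_simp
  linarith [hM n]

/-- Passing from the weighted mean and two of the three differences to the individual limits. -/
lemma tendsto_of_mean {u v w : ℕ → ℝ} {p₁ p₂ p₃ S : ℝ} (hsum : p₁ + p₂ + p₃ = 1)
    (hM : Tendsto (fun n => p₁ * u n + p₂ * v n + p₃ * w n) atTop (𝓝 S))
    (huv : Tendsto (fun n => v n - u n) atTop (𝓝 0))
    (huw : Tendsto (fun n => w n - u n) atTop (𝓝 0)) :
    Tendsto u atTop (𝓝 S) ∧ Tendsto v atTop (𝓝 S) ∧ Tendsto w atTop (𝓝 S) := by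
  have hu : Tendsto u atTop (𝓝 S) := by
    have := (hM.sub (huv.const_mul p₂)).sub (huw.const_mul p₃)
    simp only [mul_zero, sub_zero] at this
    refine this.congr fun n => ?_
    linear_combination u n * hsum
  exact ⟨hu, by simpa using huv.add hu, by simpa using huw.add hu⟩

lemma tendsto_qf {M : ℕ → H →L[ℂ] H} {S : H →L[ℂ] H} {x : H}
    (h : Tendsto (fun n => M n x) atTop (𝓝 (S x))) :
    Tendsto (fun n => (M n).reApplyInnerSelf x) atTop (𝓝 (S.reApplyInnerSelf x)) :=
  (RCLike.continuous_re.tendsto _).comp (h.inner tendsto_const_nhds)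

lemma nonneg_of_limit {M : ℕ → H →L[ℂ] H} {S : H →L[ℂ] H} (hM : ∀ n, 0 ≤ M n)
    (h : ∀ x, Tendsto (fun n => M n x) atTop (𝓝 (S x))) : 0 ≤ S := by
  rw [nonneg_iff_isPositive, isPositive_def']
  refine ⟨isSelfAdjoint_iff_isSymmetric.2 fun x y => ?_, fun x => ?_⟩
  · refine tendsto_nhds_unique ((h x).inner (tendsto_const_nhds (x := y))) ?_
    refine ((tendsto_const_nhds (x := x)).inner (h y)).congr fun n => ?_
    exact ((isSelfAdjoint_iff_isSymmetric.1 (hM n).isSelfAdjoint) x y).symm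
  · exact ge_of_tendsto' (tendsto_qf (h x)) fun n => qf_nonneg (hM n) x

lemma le_of_limit {M : ℕ → H →L[ℂ] H} {S L : H →L[ℂ] H} (hM : ∀ n, L ≤ M n)
    (h : ∀ x, Tendsto (fun n => M n x) atTop (𝓝 (S x))) : L ≤ S :=
  sub_nonneg.1 (nonneg_of_limit (M := fun n => M n - L) (fun n => sub_nonneg.2 (hM n))
    fun x => (h x).sub tendsto_const_nhds)

/-- Arithmetic–harmonic bounds: if moreover each `σₖ` dominates the
corresponding weighted harmonic mean, and `(p₁,p₂,p₃)` is the stationary probability vector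
for `(r₁,r₂,r₃)`, then for invertible positive `A, B, C` the ALM-sequence converges weakly to
a common limit `S` and `(p₁A⁻¹ + p₂B⁻¹ + p₃C⁻¹)⁻¹ ≤ S ≤ p₁A + p₂B + p₃C`. -/
theorem stmt_10
    (σ₁ σ₂ σ₃ : (H →L[ℂ] H) → (H →L[ℂ] H) → (H →L[ℂ] H))
    (hKA₁ : KuboAndo σ₁) (hKA₂ : KuboAndo σ₂) (hKA₃ : KuboAndo σ₃)
    (r₁ r₂ r₃ : ℝ) (hr₁ : r₁ ∈ Set.Ioo (0:ℝ) 1) (hr₂ : r₂ ∈ Set.Ioo (0:ℝ) 1)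
    (hr₃ : r₃ ∈ Set.Ioo (0:ℝ) 1)
    (hdom : ∀ A B : H →L[ℂ] H, A.IsPositive → B.IsPositive →
      OpLE (σ₁ A B) (((1 - r₁ : ℝ) : ℂ) • A + ((r₁ : ℝ) : ℂ) • B) ∧
      OpLE (σ₂ A B) (((1 - r₂ : ℝ) : ℂ) • A + ((r₂ : ℝ) : ℂ) • B) ∧
      OpLE (σ₃ A B) (((1 - r₃ : ℝ) : ℂ) • A + ((r₃ : ℝ) : ℂ) • B))
    (hsc : (StrictConc σ₁ r₁ ∧ StrictConc σ₂ r₂) ∨ (StrictConc σ₂ r₂ ∧ StrictConc σ₃ r₃) ∨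
      (StrictConc σ₁ r₁ ∧ StrictConc σ₃ r₃))
    (hharm : ∀ A B : H →L[ℂ] H, A.IsPositive → B.IsPositive → IsUnit A → IsUnit B →
      OpLE (Ring.inverse (((1 - r₁ : ℝ) : ℂ) • Ring.inverse A + ((r₁ : ℝ) : ℂ) • Ring.inverse B))
        (σ₁ A B) ∧
      OpLE (Ring.inverse (((1 - r₂ : ℝ) : ℂ) • Ring.inverse A + ((r₂ : ℝ) : ℂ) • Ring.inverse B))
        (σ₂ A B) ∧
      OpLE (Ring.inverse (((1 - r₃ : ℝ) : ℂ) • Ring.inverse A + ((r₃ : ℝ) : ℂ) • Ring.inverse B))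
        (σ₃ A B))
    (p₁ p₂ p₃ : ℝ) (hp₁ : p₁ ∈ Set.Ioo (0:ℝ) 1) (hp₂ : p₂ ∈ Set.Ioo (0:ℝ) 1)
    (hp₃ : p₃ ∈ Set.Ioo (0:ℝ) 1) (hpsum : p₁ + p₂ + p₃ = 1)
    (hstat₁ : p₁ = r₂ * p₂ + (1 - r₃) * p₃)
    (hstat₂ : p₂ = (1 - r₁) * p₁ + r₃ * p₃)
    (hstat₃ : p₃ = r₁ * p₁ + (1 - r₂) * p₂)
    (A B C : H →L[ℂ] H) (hA : A.IsPositive) (hB : B.IsPositive) (hC : C.IsPositive)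
    (hAu : IsUnit A) (hBu : IsUnit B) (hCu : IsUnit C) :
    ∃ S : H →L[ℂ] H, S.IsPositive ∧
      (∀ x : H, Tendsto (fun n => ((ALMseq σ₁ σ₂ σ₃ A B C n).1).reApplyInnerSelf x)
        atTop (𝓝 (S.reApplyInnerSelf x))) ∧
      (∀ x : H, Tendsto (fun n => ((ALMseq σ₁ σ₂ σ₃ A B C n).2.1).reApplyInnerSelf x)
        atTop (𝓝 (S.reApplyInnerSelf x))) ∧
      (∀ x : H, Tendsto (fun n => ((ALMseq σ₁ σ₂ σ₃ A B C n).2.2).reApplyInnerSelf x)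
        atTop (𝓝 (S.reApplyInnerSelf x))) ∧
      OpLE (Ring.inverse ((p₁ : ℂ) • Ring.inverse A + (p₂ : ℂ) • Ring.inverse B +
        (p₃ : ℂ) • Ring.inverse C)) S ∧
      OpLE S ((p₁ : ℂ) • A + (p₂ : ℂ) • B + (p₃ : ℂ) • C) := by
  have hd₁ : ∀ X Y : H →L[ℂ] H, 0 ≤ X → 0 ≤ Y →
      σ₁ X Y ≤ ((1 - r₁ : ℝ) : ℂ) • X + ((r₁ : ℝ) : ℂ) • Y := fun X Y hX hY =>
    (hdom X Y ((nonneg_iff_isPositive _).1 hX) ((nonneg_iff_isPositive _).1 hY)).1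
  have hd₂ : ∀ X Y : H →L[ℂ] H, 0 ≤ X → 0 ≤ Y →
      σ₂ X Y ≤ ((1 - r₂ : ℝ) : ℂ) • X + ((r₂ : ℝ) : ℂ) • Y := fun X Y hX hY =>
    (hdom X Y ((nonneg_iff_isPositive _).1 hX) ((nonneg_iff_isPositive _).1 hY)).2.1
  have hd₃ : ∀ X Y : H →L[ℂ] H, 0 ≤ X → 0 ≤ Y →
      σ₃ X Y ≤ ((1 - r₃ : ℝ) : ℂ) • X + ((r₃ : ℝ) : ℂ) • Y := fun X Y hX hY =>
    (hdom X Y ((nonneg_iff_isPositive _).1 hX) ((nonneg_iff_isPositive _).1 hY)).2.2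
  have hAs : IsStrictlyPositive A := hAu.isStrictlyPositive ((nonneg_iff_isPositive _).2 hA)
  have hBs : IsStrictlyPositive B := hBu.isStrictlyPositive ((nonneg_iff_isPositive _).2 hB)
  have hCs : IsStrictlyPositive C := hCu.isStrictlyPositive ((nonneg_iff_isPositive _).2 hC)
  obtain ⟨mA, hmA, hmA'⟩ := exists_lower_bound hAs
  obtain ⟨mB, hmB, hmB'⟩ := exists_lower_bound hBs
  obtain ⟨mC, hmC, hmC'⟩ := exists_lower_bound hCs
  obtain ⟨m, hm, hmmA, hmmB, hmmC⟩ : ∃ m : ℝ, 0 < m ∧ m ≤ mA ∧ m ≤ mB ∧ m ≤ mC :=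
    ⟨min mA (min mB mC), by positivity, min_le_left _ _, (min_le_right _ _).trans (min_le_left _ _),
      (min_le_right _ _).trans (min_le_right _ _)⟩
  obtain ⟨K, hmK, hKA, hKB, hKC⟩ : ∃ K : ℝ, m ≤ K ∧ ‖A‖ ≤ K ∧ ‖B‖ ≤ K ∧ ‖C‖ ≤ K := by
    refine ⟨m + ‖A‖ + ‖B‖ + ‖C‖, ?_, ?_, ?_, ?_⟩ <;>
    linarith [norm_nonneg A, norm_nonneg B, norm_nonneg C]
  have hlow : ∀ {m' : ℝ}, m ≤ m' → (m : ℂ) • (1 : H →L[ℂ] H) ≤ (m' : ℂ) • 1 := fun {m'} h => by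
    rw [← sub_nonneg, ← sub_smul, ← Complex.ofReal_sub]
    exact scalar_nonneg (sub_nonneg.2 h)
  set a : ℕ → H →L[ℂ] H := fun n => (ALMseq σ₁ σ₂ σ₃ A B C n).1 with ha
  set b : ℕ → H →L[ℂ] H := fun n => (ALMseq σ₁ σ₂ σ₃ A B C n).2.1 with hb
  set c : ℕ → H →L[ℂ] H := fun n => (ALMseq σ₁ σ₂ σ₃ A B C n).2.2 with hc
  have ha1 : ∀ n, a (n + 1) = σ₁ (b n) (c n) := fun n => rfl
  have hb1 : ∀ n, b (n + 1) = σ₂ (c n) (a n) := fun n => rfl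
  have hc1 : ∀ n, c (n + 1) = σ₃ (a n) (b n) := fun n => rfl
  have hbd : ∀ n, ((m : ℂ) • (1 : H →L[ℂ] H) ≤ a n ∧ a n ≤ (K : ℂ) • (1 : H →L[ℂ] H)) ∧
      ((m : ℂ) • (1 : H →L[ℂ] H) ≤ b n ∧ b n ≤ (K : ℂ) • (1 : H →L[ℂ] H)) ∧
      ((m : ℂ) • (1 : H →L[ℂ] H) ≤ c n ∧ c n ≤ (K : ℂ) • (1 : H →L[ℂ] H)) := by
    intro n
    induction n with
    | zero =>
      exact ⟨⟨(hlow hmmA).trans hmA', le_norm_smul hAs.nonneg hKA⟩,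
        ⟨(hlow hmmB).trans hmB', le_norm_smul hBs.nonneg hKB⟩,
        ⟨(hlow hmmC).trans hmC', le_norm_smul hCs.nonneg hKC⟩⟩
    | succ n ih =>
      exact ⟨KA_bounds hKA₁ hr₁ hd₁ hm ih.2.1 ih.2.2, KA_bounds hKA₂ hr₂ hd₂ hm ih.2.2 ih.1,
        KA_bounds hKA₃ hr₃ hd₃ hm ih.1 ih.2.1⟩
  have has : ∀ n, IsStrictlyPositive (a n) := fun n => sp_of_le (sp_scalar hm) (hbd n).1.1
  have hbs : ∀ n, IsStrictlyPositive (b n) := fun n => sp_of_le (sp_scalar hm) (hbd n).2.1.1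
  have hcs : ∀ n, IsStrictlyPositive (c n) := fun n => sp_of_le (sp_scalar hm) (hbd n).2.2.1
  -- the weighted arithmetic means decrease to the limit `S`
  set M : ℕ → H →L[ℂ] H := fun n => (p₁ : ℂ) • a n + (p₂ : ℂ) • b n + (p₃ : ℂ) • c n with hM
  have hMpos : ∀ n, 0 ≤ M n := fun n =>
    add_nonneg (add_nonneg (sp_smul hp₁.1 (has n)).nonneg (sp_smul hp₂.1 (hbs n)).nonneg)
      (sp_smul hp₃.1 (hcs n)).nonneg
  have hManti : Antitone M := antitone_nat_of_succ_le fun n =>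
    weighted_step_s10 hp₁.1 hp₂.1 hp₃.1 hstat₁ hstat₂ hstat₃
      (hd₁ _ _ (hbs n).nonneg (hcs n).nonneg) (hd₂ _ _ (hcs n).nonneg (has n).nonneg)
      (hd₃ _ _ (has n).nonneg (hbs n).nonneg)
  obtain ⟨S, hS⟩ := exists_strong_limit hMpos hManti
  -- the weighted means of the inverses decrease, so the weighted harmonic means increase
  set W : ℕ → H →L[ℂ] H := fun n => (p₁ : ℂ) • Ring.inverse (a n) +
    (p₂ : ℂ) • Ring.inverse (b n) + (p₃ : ℂ) • Ring.inverse (c n) with hW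
  have hWpos : ∀ n, IsStrictlyPositive (W n) := fun n =>
    sp_add (sp_add (sp_smul hp₁.1 (has n).ringInverse) (sp_smul hp₂.1 (hbs n).ringInverse).nonneg)
      (sp_smul hp₃.1 (hcs n).ringInverse).nonneg
  have hh : ∀ {X Y : H →L[ℂ] H}, IsStrictlyPositive X → IsStrictlyPositive Y → _ :=
    fun {X Y} hX hY => hharm X Y ((nonneg_iff_isPositive _).1 hX.nonneg)
      ((nonneg_iff_isPositive _).1 hY.nonneg) hX.isUnit hY.isUnit
  have hWanti : Antitone W := antitone_nat_of_succ_le fun n =>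
    weighted_step_s10 hp₁.1 hp₂.1 hp₃.1 hstat₁ hstat₂ hstat₃
      (inverse_step hr₁ (hbs n) (hcs n) (hh (hbs n) (hcs n)).1)
      (inverse_step hr₂ (hcs n) (has n) (hh (hcs n) (has n)).2.1)
      (inverse_step hr₃ (has n) (hbs n) (hh (has n) (hbs n)).2.2)
  have hWM : ∀ n, Ring.inverse (W 0) ≤ M n := fun n =>
    (CStarAlgebra.ringInverse_le_ringInverse (hWanti (Nat.zero_le n)) (hWpos n)).trans
      (harmonic_le_arithmetic (has n) (hbs n) (hcs n) hp₁.1 hp₂.1 hp₃.1 hpsum)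
  have hweak : ∀ x : H,
      Tendsto (fun n => (a n).reApplyInnerSelf x) atTop (𝓝 (S.reApplyInnerSelf x)) ∧
      Tendsto (fun n => (b n).reApplyInnerSelf x) atTop (𝓝 (S.reApplyInnerSelf x)) ∧
      Tendsto (fun n => (c n).reApplyInnerSelf x) atTop (𝓝 (S.reApplyInnerSelf x)) := by
    intro x
    have hq := tendsto_qf (hS x)
    have hMq : ∀ n, (M n).reApplyInnerSelf x = p₁ * (a n).reApplyInnerSelf x +
        p₂ * (b n).reApplyInnerSelf x + p₃ * (c n).reApplyInnerSelf x := fun n => by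
      rw [hM, qf_add, qf_add, qf_smul, qf_smul, qf_smul]
    have hsub : Tendsto (fun n => (M n).reApplyInnerSelf x - (M (n + 1)).reApplyInnerSelf x)
        atTop (𝓝 0) := by
      simpa using hq.sub ((tendsto_add_atTop_iff_nat 1).2 hq)
    -- each gap between the arithmetic step and the actual step is at most a multiple of
    -- the decrement of the weighted mean
    set D₁ : ℕ → ℝ := fun n => (1 - r₁) * (b n).reApplyInnerSelf x +
      r₁ * (c n).reApplyInnerSelf x - (σ₁ (b n) (c n)).reApplyInnerSelf x with hD₁
    set D₂ : ℕ → ℝ := fun n => (1 - r₂) * (c n).reApplyInnerSelf x +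
      r₂ * (a n).reApplyInnerSelf x - (σ₂ (c n) (a n)).reApplyInnerSelf x with hD₂
    set D₃ : ℕ → ℝ := fun n => (1 - r₃) * (a n).reApplyInnerSelf x +
      r₃ * (b n).reApplyInnerSelf x - (σ₃ (a n) (b n)).reApplyInnerSelf x with hD₃
    have hD₁0 : ∀ n, 0 ≤ D₁ n := fun n => by
      have := qf_mono (hd₁ _ _ (hbs n).nonneg (hcs n).nonneg) x
      rw [qf_add, qf_smul, qf_smul] at this
      exact sub_nonneg.2 this
    have hD₂0 : ∀ n, 0 ≤ D₂ n := fun n => by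
      have := qf_mono (hd₂ _ _ (hcs n).nonneg (has n).nonneg) x
      rw [qf_add, qf_smul, qf_smul] at this
      exact sub_nonneg.2 this
    have hD₃0 : ∀ n, 0 ≤ D₃ n := fun n => by
      have := qf_mono (hd₃ _ _ (has n).nonneg (hbs n).nonneg) x
      rw [qf_add, qf_smul, qf_smul] at this
      exact sub_nonneg.2 this
    have hDsum : ∀ n, (M n).reApplyInnerSelf x - (M (n + 1)).reApplyInnerSelf x =
        p₁ * D₁ n + p₂ * D₂ n + p₃ * D₃ n := fun n => by
      rw [hMq, hMq, ha1, hb1, hc1]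
      simp only [hD₁, hD₂, hD₃]
      linear_combination (a n).reApplyInnerSelf x * hstat₁ + (b n).reApplyInnerSelf x * hstat₂ +
        (c n).reApplyInnerSelf x * hstat₃
    have hlim : ∀ {p : ℝ} {D : ℕ → ℝ}, 0 < p → (∀ n, 0 ≤ D n) →
        (∀ n, p * D n ≤ (M n).reApplyInnerSelf x - (M (n + 1)).reApplyInnerSelf x) →
        Tendsto D atTop (𝓝 0) := fun {p D} hp h0 hle => by
      have h1 : Tendsto (fun n => p * D n) atTop (𝓝 0) :=
        squeeze_zero (fun n => mul_nonneg hp.le (h0 n)) hle hsub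
      have h2 := h1.const_mul p⁻¹
      simpa [inv_mul_cancel_left₀ hp.ne'] using h2
    have hp1D := fun n => mul_nonneg hp₁.1.le (hD₁0 n)
    have hp2D := fun n => mul_nonneg hp₂.1.le (hD₂0 n)
    have hp3D := fun n => mul_nonneg hp₃.1.le (hD₃0 n)
    have t₁ : Tendsto D₁ atTop (𝓝 0) :=
      hlim hp₁.1 hD₁0 fun n => by rw [hDsum]; linarith [hp2D n, hp3D n]
    have t₂ : Tendsto D₂ atTop (𝓝 0) :=
      hlim hp₂.1 hD₂0 fun n => by rw [hDsum]; linarith [hp1D n, hp3D n]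
    have t₃ : Tendsto D₃ atTop (𝓝 0) :=
      hlim hp₃.1 hD₃0 fun n => by rw [hDsum]; linarith [hp1D n, hp2D n]
    have hL : 0 ≤ K * ‖x‖ ^ 2 := mul_nonneg (hm.le.trans hmK) (sq_nonneg _)
    have hub : ∀ {X : H →L[ℂ] H}, X ≤ (K : ℂ) • (1 : H →L[ℂ] H) →
        X.reApplyInnerSelf x ≤ K * ‖x‖ ^ 2 := fun {X} h => by
      have := qf_mono h x
      rwa [qf_smul, qf_one] at this
    have e₁ : StrictConc σ₁ r₁ → Tendsto
        (fun n => (c n).reApplyInnerSelf x - (b n).reApplyInnerSelf x) atTop (𝓝 0) := fun hs =>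
      tendsto_sub_of_gap (fun n => hub (hbd n).2.1.2) hL t₁ fun ε hε => by
        obtain ⟨N, -, hN⟩ := pair_gap hKA₁ hr₁ hs hd₁ hm hmK hε
        exact ⟨N, fun n => hN _ _ (hbd n).2.1.1 (hbd n).2.1.2 (hbd n).2.2.1 (hbd n).2.2.2 x⟩
    have e₂ : StrictConc σ₂ r₂ → Tendsto
        (fun n => (a n).reApplyInnerSelf x - (c n).reApplyInnerSelf x) atTop (𝓝 0) := fun hs =>
      tendsto_sub_of_gap (fun n => hub (hbd n).2.2.2) hL t₂ fun ε hε => by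
        obtain ⟨N, -, hN⟩ := pair_gap hKA₂ hr₂ hs hd₂ hm hmK hε
        exact ⟨N, fun n => hN _ _ (hbd n).2.2.1 (hbd n).2.2.2 (hbd n).1.1 (hbd n).1.2 x⟩
    have e₃ : StrictConc σ₃ r₃ → Tendsto
        (fun n => (b n).reApplyInnerSelf x - (a n).reApplyInnerSelf x) atTop (𝓝 0) := fun hs =>
      tendsto_sub_of_gap (fun n => hub (hbd n).1.2) hL t₃ fun ε hε => by
        obtain ⟨N, -, hN⟩ := pair_gap hKA₃ hr₃ hs hd₃ hm hmK hε
        exact ⟨N, fun n => hN _ _ (hbd n).1.1 (hbd n).1.2 (hbd n).2.1.1 (hbd n).2.1.2 x⟩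
    have hq' := hq.congr hMq
    rcases hsc with ⟨s₁, s₂⟩ | ⟨s₂, s₃⟩ | ⟨s₁, s₃⟩
    · refine tendsto_of_mean hpsum hq' ?_ ?_
      · simpa using ((e₁ s₁).add (e₂ s₂)).neg
      · simpa using (e₂ s₂).neg
    · refine tendsto_of_mean hpsum hq' (e₃ s₃) ?_
      simpa using (e₂ s₂).neg
    · refine tendsto_of_mean hpsum hq' (e₃ s₃) ?_
      simpa using (e₁ s₁).add (e₃ s₃)
  refine ⟨S, (nonneg_iff_isPositive _).1 (nonneg_of_limit hMpos hS), fun x => (hweak x).1,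
    fun x => (hweak x).2.1, fun x => (hweak x).2.2, le_of_limit hWM hS, ?_⟩
  have hSM := nonneg_of_limit (M := fun n => M 0 - M n) (S := M 0 - S)
    (fun n => sub_nonneg.2 (hManti (Nat.zero_le n))) fun x => tendsto_const_nhds.sub (hS x)
  exact sub_nonneg.1 hSM
end

section
/- Let H be a complex Hilbert space and let M : (B(H)_+)^3 → B(H)_+ be monotone (A_j ≤ B_j for j = 1,2,3 implies M(A_1,A_2,A_3) ≤ M(B_1,B_2,B_3)), positively homogeneous (M(tA, tB, tC) = t·M(A,B,C) for all t > 0), and normalized (M(I,I,I) = I). If 0 < m ≤ L and m·I ≤ A, A′, B, B′, C, C′ ≤ L·I, then ‖M(A,B,C) − M(A′,B′,C′)‖ ≤ (L/m)·max{‖A − A′‖, ‖B − B′‖, ‖C − C′‖}. -/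
/-!
Let `d` be the largest of the three norms `‖A - A'‖`, `‖B - B'‖`, `‖C - C'‖` and put `k = d / m`.
Since `A - A' ≤ d • 1 ≤ k • A'` (using `m • 1 ≤ A'`), it follows that `A ≤ (1 + k) • A'`, and
likewise for
the other two variables (`OpLE.le_smul_of_norm_sub_le`). Monotonicity and homogeneity give
`M A B C ≤ (1 + k) • M A' B' C'`, while `M A' B' C' ≤ M (L • 1) (L • 1) (L • 1) = L • 1`, so
`M A B C - M A' B' C' ≤ (k * L) • 1`. The situation is symmetric in the two triples, and a
self-adjoint operator lying between `-(k * L) • 1` and `(k * L) • 1` has norm at most `k * L`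
(`norm_le_of_opLE_smul_one`).
-/

open Filter Topology ContinuousLinearMap

variable {H : Type*} [NormedAddCommGroup H] [InnerProductSpace ℂ H] [CompleteSpace H]

open scoped ComplexOrder in
lemma isPositive_ofReal_smul {T : H →L[ℂ] H} (hT : T.IsPositive) {r : ℝ} (hr : 0 ≤ r) :
    ((r : ℂ) • T).IsPositive :=
  hT.smul_of_nonneg (by exact_mod_cast hr)

lemma OpLE.of_norm_le {T : H →L[ℂ] H} (hT : IsSelfAdjoint T) {d : ℝ} (hd : ‖T‖ ≤ d) :
    OpLE T ((d : ℂ) • 1) := by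
  have h1 : (algebraMap ℝ (H →L[ℂ] H) ‖T‖ - T).IsPositive :=
    (ContinuousLinearMap.le_def _ _).1 hT.le_algebraMap_norm_self
  have h2 := isPositive_ofReal_smul (H := H) isPositive_one (sub_nonneg.2 hd)
  have h3 : algebraMap ℝ (H →L[ℂ] H) ‖T‖ = ((‖T‖ : ℝ) : ℂ) • 1 := by
    rw [Algebra.algebraMap_eq_smul_one, Complex.coe_smul]
  rw [h3] at h1
  have h := h1.add h2
  unfold OpLE
  convert h using 1
  push_cast
  module

/-- The additive perturbation `A - A'` is absorbed multiplicatively, because `A'` is bounded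
below by `m • 1`. -/
lemma OpLE.le_smul_of_norm_sub_le {A A' : H →L[ℂ] H} (hA : A.IsPositive) (hA' : A'.IsPositive)
    {m k : ℝ} (hk : 0 ≤ k) (hm : OpLE ((m : ℂ) • 1) A') (hd : ‖A - A'‖ ≤ k * m) :
    OpLE A (((1 + k : ℝ) : ℂ) • A') := by
  have h1 := OpLE.of_norm_le (hA.isSelfAdjoint.sub hA'.isSelfAdjoint) hd
  have h := (isPositive_ofReal_smul hm hk).add h1
  unfold OpLE
  convert h using 1
  push_cast
  module

/-- The norm of a self-adjoint operator is the supremum of its Rayleigh quotients in absolute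
value, so it is bounded by any `c` with `-c • 1 ≤ T ≤ c • 1`. -/
lemma norm_le_of_opLE_smul_one {T : H →L[ℂ] H} (hT : IsSelfAdjoint T) {c : ℝ} (hc : 0 ≤ c)
    (h1 : OpLE T ((c : ℂ) • 1)) (h2 : OpLE (-T) ((c : ℂ) • 1)) : ‖T‖ ≤ c := by
  rw [T.norm_eq_iSup_rayleighQuotient hT.isSymmetric]
  refine ciSup_le fun x => ?_
  have e1 := h1.re_inner_nonneg_left x
  have e2 := h2.re_inner_nonneg_left x
  simp [inner_add_left, inner_sub_left] at e1 e2
  rw [rayleighQuotient, abs_div, abs_of_nonneg (sq_nonneg ‖x‖)]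
  refine div_le_of_le_mul₀ (sq_nonneg _) hc ?_
  rw [reApplyInnerSelf_apply, abs_le]
  have e3 : (inner ℂ (c • x) x).re = c * ‖x‖ ^ 2 := by
    rw [← Complex.coe_smul, inner_smul_left, inner_self_eq_norm_sq_to_K, Complex.conj_ofReal]
    simp [← Complex.ofReal_pow]
  simp only [RCLike.re_to_complex]
  constructor <;> linarith

/-- Norm-Lipschitz estimate: if `M` is a monotone, positively homogeneous,
normalized three-variable map on `B(H)₊`, and `m·I ≤ A, A', B, B', C, C' ≤ L·I` with
`0 < m ≤ L`, then
`‖M(A,B,C) − M(A',B',C')‖ ≤ (L/m)·max{‖A−A'‖, ‖B−B'‖, ‖C−C'‖}`. -/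
theorem stmt_11
    (M : (H →L[ℂ] H) → (H →L[ℂ] H) → (H →L[ℂ] H) → (H →L[ℂ] H))
    (hM_pos : ∀ A B C : H →L[ℂ] H, A.IsPositive → B.IsPositive → C.IsPositive →
      (M A B C).IsPositive)
    (hM_mono : ∀ A₁ A₂ A₃ B₁ B₂ B₃ : H →L[ℂ] H,
      A₁.IsPositive → A₂.IsPositive → A₃.IsPositive →
      B₁.IsPositive → B₂.IsPositive → B₃.IsPositive →
      OpLE A₁ B₁ → OpLE A₂ B₂ → OpLE A₃ B₃ → OpLE (M A₁ A₂ A₃) (M B₁ B₂ B₃))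
    (hM_homog : ∀ (t : ℝ), 0 < t → ∀ A B C : H →L[ℂ] H,
      A.IsPositive → B.IsPositive → C.IsPositive →
      M ((t : ℂ) • A) ((t : ℂ) • B) ((t : ℂ) • C) = (t : ℂ) • M A B C)
    (hM_norm : M 1 1 1 = 1)
    (m L : ℝ) (hm : 0 < m) (hmL : m ≤ L)
    (A A' B B' C C' : H →L[ℂ] H)
    (hA : A.IsPositive) (hA' : A'.IsPositive) (hB : B.IsPositive)
    (hB' : B'.IsPositive) (hC : C.IsPositive) (hC' : C'.IsPositive)
    (hAm : OpLE ((m : ℂ) • 1) A) (hAL : OpLE A ((L : ℂ) • 1))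
    (hA'm : OpLE ((m : ℂ) • 1) A') (hA'L : OpLE A' ((L : ℂ) • 1))
    (hBm : OpLE ((m : ℂ) • 1) B) (hBL : OpLE B ((L : ℂ) • 1))
    (hB'm : OpLE ((m : ℂ) • 1) B') (hB'L : OpLE B' ((L : ℂ) • 1))
    (hCm : OpLE ((m : ℂ) • 1) C) (hCL : OpLE C ((L : ℂ) • 1))
    (hC'm : OpLE ((m : ℂ) • 1) C') (hC'L : OpLE C' ((L : ℂ) • 1)) :
    ‖M A B C - M A' B' C'‖ ≤ (L / m) * max (max ‖A - A'‖ ‖B - B'‖) ‖C - C'‖ := by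
  set d := max (max ‖A - A'‖ ‖B - B'‖) ‖C - C'‖ with hd
  have hdA : ‖A - A'‖ ≤ d := (le_max_left _ _).trans (le_max_left _ _)
  have hdB : ‖B - B'‖ ≤ d := (le_max_right _ _).trans (le_max_left _ _)
  have hdC : ‖C - C'‖ ≤ d := le_max_right _ _
  have hd0 : 0 ≤ d := (norm_nonneg _).trans hdC
  obtain ⟨k, hk⟩ : ∃ k, k = d / m := ⟨_, rfl⟩
  have hk0 : 0 ≤ k := hk ▸ div_nonneg hd0 hm.le
  have hkm : d = k * m := by rw [hk]; field_simp
  have hL : 0 < L := hm.trans_le hmL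
  have hLd : L / m * d = k * L := by rw [hk]; ring
  have hLI : (((L : ℝ) : ℂ) • (1 : H →L[ℂ] H)).IsPositive :=
    isPositive_ofReal_smul isPositive_one hL.le
  have hk1 : (0 : ℝ) < 1 + k := by linarith
  -- One-sided estimate, stated for arbitrary triples so that it can be applied in both directions.
  have key : ∀ X X' Y Y' Z Z' : H →L[ℂ] H,
      X.IsPositive → X'.IsPositive → Y.IsPositive → Y'.IsPositive → Z.IsPositive →
      Z'.IsPositive → OpLE ((m : ℂ) • 1) X' → OpLE ((m : ℂ) • 1) Y' → OpLE ((m : ℂ) • 1) Z' →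
      OpLE X' ((L : ℂ) • 1) → OpLE Y' ((L : ℂ) • 1) → OpLE Z' ((L : ℂ) • 1) →
      ‖X - X'‖ ≤ d → ‖Y - Y'‖ ≤ d → ‖Z - Z'‖ ≤ d →
      OpLE (M X Y Z - M X' Y' Z') (((k * L : ℝ) : ℂ) • 1) := by
    intro X X' Y Y' Z Z' hX hX' hY hY' hZ hZ' mX mY mZ lX lY lZ dX dY dZ
    rw [hkm] at dX dY dZ
    have h1 := hM_mono _ _ _ _ _ _ hX hY hZ
      (isPositive_ofReal_smul hX' hk1.le) (isPositive_ofReal_smul hY' hk1.le)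
      (isPositive_ofReal_smul hZ' hk1.le)
      (OpLE.le_smul_of_norm_sub_le hX hX' hk0 mX dX)
      (OpLE.le_smul_of_norm_sub_le hY hY' hk0 mY dY)
      (OpLE.le_smul_of_norm_sub_le hZ hZ' hk0 mZ dZ)
    rw [hM_homog _ hk1 _ _ _ hX' hY' hZ'] at h1
    have h2 := hM_mono _ _ _ _ _ _ hX' hY' hZ' hLI hLI hLI lX lY lZ
    rw [hM_homog _ hL _ _ _ isPositive_one isPositive_one isPositive_one, hM_norm] at h2
    have h := h1.add (isPositive_ofReal_smul h2 hk0)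
    unfold OpLE
    convert h using 1
    push_cast
    module
  rw [hLd]
  refine norm_le_of_opLE_smul_one
    ((hM_pos _ _ _ hA hB hC).isSelfAdjoint.sub (hM_pos _ _ _ hA' hB' hC').isSelfAdjoint)
    (mul_nonneg hk0 hL.le)
    (key _ _ _ _ _ _ hA hA' hB hB' hC hC' hA'm hB'm hC'm hA'L hB'L hC'L hdA hdB hdC) ?_
  rw [neg_sub]
  exact key _ _ _ _ _ _ hA' hA hB' hB hC' hC hAm hBm hCm hAL hBL hCL
    (by rwa [norm_sub_rev]) (by rwa [norm_sub_rev]) (by rwa [norm_sub_rev])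
end

section
/- Let H be a complex Hilbert space, r_1, r_2, r_3 ∈ (0,1), and let (p_1,p_2,p_3) be the stationary probability vector for (r_1,r_2,r_3). Let A, B, C ∈ B(H)_+ be invertible and α, β, γ > 0. Let (A_n,B_n,C_n) be the ALM-sequence from (A,B,C) with (#_{r_1},#_{r_2},#_{r_3}) and (A_n′,B_n′,C_n′) the ALM-sequence from (αA, βB, γC) with (#_{r_1},#_{r_2},#_{r_3}). Then for every x ∈ H, the limits lim_n ⟨A_n x, x⟩ and lim_n ⟨A_n′ x, x⟩ exist and lim_n ⟨A_n′ x, x⟩ = α^{p_1} β^{p_2} γ^{p_3} · lim_n ⟨A_n x, x⟩. -/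
/-!
The proof takes place in the cone of strictly positive elements of a unital C⋆-algebra, where
`a ≤ exp D • b` together with `b ≤ exp D • a` says that the Thompson distance of `a` and `b` is at
most `D`.

The mean `gm r a b` of `a` and `b` is monotone in `b` by the Löwner–Heinz inequality; since
`gm r a b = gm (1 - r) b a` (`gm_comm`), it is monotone in both variables. Together with the
homogeneity `gm r (s • a) (t • b) = (s ^ (1 - r) * t ^ r) • gm r a b` (`gm_smul`) this gives the
convexity estimate `gm_le` for the Thompson distance.

*Existence of the limits.* If `a`, `b`, `c` are pairwise at distance at most `D`, then `gm s a c`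
and `gm t b c` are at distance at most `(1 - min s t) * D` (`contract`): for `s ≤ t` write
`gm s a c = gm t a (gm (s / t) a c)` and apply `gm_le` twice. Any two of the three entries of an
ALM step have this shape, because each pair shares one of its arguments. Hence the diameter of the
triple `(Aₙ, Bₙ, Cₙ)` decays like `κ ^ n * D` for some `κ < 1`, and
`Aₙ₊₁ ≤ exp (κ ^ n * D) • Aₙ`. The real sequence `⟨Aₙ x, x⟩` is therefore decreasing up to
multiplication by a convergent factor, and it converges.

*The scaling factor.* By homogeneity, scaling the initial triple by `exp x`, `exp y`, `exp z`
scales the `n`-th triple by the exponentials of `logWeights r₁ r₂ r₃ x y z n`, an orbit of a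
`3 × 3` stochastic matrix. The stationary vector gives the invariant `p₁ x + p₂ y + p₃ z`, and the
spread of the orbit contracts by the scalar version of `contract`, so its first entry tends to
that invariant (`scalar_tendsto`).
-/

open Filter Topology ContinuousLinearMap

variable {H : Type*} [NormedAddCommGroup H] [InnerProductSpace ℂ H] [CompleteSpace H]

/-- Real power of an operator via the continuous functional calculus. -/
noncomputable def opPow (A : H →L[ℂ] H) (r : ℝ) : H →L[ℂ] H :=
  cfc (fun x : ℝ => x ^ r) A

/-- The weighted operator geometric mean `A #ᵣ B = A^{1/2}(A^{-1/2} B A^{-1/2})^r A^{1/2}`. -/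
noncomputable def geomMean (r : ℝ) (A B : H →L[ℂ] H) : H →L[ℂ] H :=
  opPow A (1/2) * opPow (opPow A (-(1/2)) * B * opPow A (-(1/2))) r * opPow A (1/2)

/-! ### Weighted geometric means in a C⋆-algebra -/

section CStar
variable {𝓐 : Type*} [CStarAlgebra 𝓐] [PartialOrder 𝓐] [StarOrderedRing 𝓐]

/-- The weighted geometric mean in a unital C⋆-algebra, with powers taken in Mathlib's `ℝ≥0`-valued
functional calculus (`CFC.rpow`). For strictly positive operators it agrees with `geomMean`. -/
noncomputable def gm (r : ℝ) (a b : 𝓐) : 𝓐 :=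
  a ^ (1 / 2 : ℝ) * (a ^ (-(1 / 2) : ℝ) * b * a ^ (-(1 / 2) : ℝ)) ^ r * a ^ (1 / 2 : ℝ)

variable {a b c d : 𝓐} {r s t : ℝ}

lemma isSP_conj (ha : IsStrictlyPositive a) (hb : IsStrictlyPositive b) :
    IsStrictlyPositive (a * b * a) :=
  IsStrictlyPositive.conjugate_of_isUnit_of_isSelfAdjoint _ _ ha.isUnit ha.isSelfAdjoint hb

lemma isSP_gm (r : ℝ) (ha : IsStrictlyPositive a) (hb : IsStrictlyPositive b) :
    IsStrictlyPositive (gm r a b) :=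
  isSP_conj (ha.rpow _ _) ((isSP_conj (ha.rpow _ _) hb).rpow _ _)

lemma half_mul_half (ha : IsStrictlyPositive a) : a ^ (1 / 2 : ℝ) * a ^ (1 / 2 : ℝ) = a := by
  rw [← CFC.rpow_add ha.isUnit, add_halves, CFC.rpow_one a ha.nonneg]

lemma smul_rpow (ha : IsStrictlyPositive a) (ht : 0 < t) (s : ℝ) :
    (t • a) ^ s = t ^ s • a ^ s := by
  have h1 := ha.smul ht
  have hs : ∀ x ∈ spectrum ℝ a, 0 < x := fun x hx => ha.spectrum_pos hx
  rw [CFC.rpow_eq_cfc_real h1.nonneg, CFC.rpow_eq_cfc_real ha.nonneg,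
    ← cfc_comp_const_mul t _ a ?_ ha.isSelfAdjoint, ← cfc_const_mul _ _ _ ?_]
  · exact cfc_congr fun x hx => Real.mul_rpow ht.le (hs x hx).le
  · exact fun x hx => (Real.continuousAt_rpow_const _ _ (.inl (hs x hx).ne')).continuousWithinAt
  · rintro _ ⟨x, hx, rfl⟩
    exact (Real.continuousAt_rpow_const _ _
      (.inl (mul_pos ht (hs x hx)).ne')).continuousWithinAt

/-- Joint homogeneity of the weighted geometric mean. -/
lemma gm_smul (r : ℝ) (ha : IsStrictlyPositive a) (hb : IsStrictlyPositive b)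
    (hs : 0 < s) (ht : 0 < t) :
    gm r (s • a) (t • b) = (s ^ (1 - r) * t ^ r) • gm r a b := by
  have hK := isSP_conj (ha.rpow a (-(1 / 2))) hb
  have h2 : (s ^ (-(1 / 2) : ℝ) • a ^ (-(1 / 2) : ℝ)) * (t • b) *
      (s ^ (-(1 / 2) : ℝ) • a ^ (-(1 / 2) : ℝ)) =
      (s⁻¹ * t) • (a ^ (-(1 / 2) : ℝ) * b * a ^ (-(1 / 2) : ℝ)) := by
    simp only [smul_mul_assoc, mul_smul_comm, smul_smul]
    congr 1
    have e : s ^ (-(1 / 2) : ℝ) * s ^ (-(1 / 2) : ℝ) = s⁻¹ := by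
      rw [← Real.rpow_add hs, ← Real.rpow_neg_one]; norm_num
    rw [← e]; ring
  rw [gm, gm, smul_rpow ha hs, smul_rpow ha hs, h2, smul_rpow hK (by positivity)]
  simp only [smul_mul_assoc, mul_smul_comm, smul_smul]
  congr 1
  have e : s ^ (1 - r) = s ^ (1 / 2 : ℝ) * s ^ (1 / 2 : ℝ) * s⁻¹ ^ r := by
    rw [← Real.rpow_add hs, Real.inv_rpow hs.le, ← Real.rpow_neg hs.le, ← Real.rpow_add hs]
    norm_num [sub_eq_add_neg]
  rw [e, Real.mul_rpow (by positivity) ht.le]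
  ring

lemma gm_mono_right (hr : r ∈ Set.Icc (0 : ℝ) 1) (hbc : b ≤ c) : gm r a b ≤ gm r a c :=
  conjugate_le_conjugate_of_nonneg (CFC.rpow_le_rpow hr
    (conjugate_le_conjugate_of_nonneg hbc CFC.rpow_nonneg)) CFC.rpow_nonneg

/-- Along the curve `s ↦ gm s a b` starting at `a`, parameters multiply. -/
lemma gm_gm (ha : IsStrictlyPositive a) (hb : IsStrictlyPositive b) (hs : s ≠ 0) :
    gm t a (gm s a b) = gm (s * t) a b := by
  have hK := isSP_conj (ha.rpow a (-(1 / 2))) hb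
  have h1 := CFC.rpow_neg_mul_rpow (1 / 2) ha
  have h2 := CFC.rpow_mul_rpow_neg (1 / 2) ha
  rw [gm, gm, gm, ← CFC.rpow_rpow _ s t hs hK]
  congr 3
  simp only [mul_assoc, h2, mul_one]
  rw [← mul_assoc, h1, one_mul]

/-- Real powers commute with conjugation by a unitary. -/
lemma conj_rpow (u : unitary 𝓐) (ha : 0 ≤ a)
    (hs : ContinuousOn (fun x : ℝ => x ^ s) (spectrum ℝ a)) :
    ((u : 𝓐) * a * star (u : 𝓐)) ^ s = u * a ^ s * star (u : 𝓐) := by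
  have h0 : 0 ≤ (u : 𝓐) * a * star (u : 𝓐) := star_right_conjugate_nonneg ha _
  rw [CFC.rpow_eq_cfc_real h0, CFC.rpow_eq_cfc_real ha]
  have := StarAlgHomClass.map_cfc (S := ℂ) (Unitary.conjStarAlgAut ℂ 𝓐 u)
    (fun x : ℝ => x ^ s) a hs
    (show Continuous fun x : 𝓐 => (u : 𝓐) * x * star (u : 𝓐) by fun_prop)
    (ha := ha.isSelfAdjoint) (hφa := by simpa using h0.isSelfAdjoint)
  simpa using this.symm

/-- The symmetry `a #ᵣ b = b #₁₋ᵣ a`. With `K = a^{-1/2} b a^{-1/2}` and `U` the unitary factor in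
the polar decomposition of `b^{1/2} a^{-1/2}`, one has `b^{-1/2} a b^{-1/2} = U K⁻¹ U*`, which
converts powers of one middle factor into powers of the other. -/
lemma gm_comm (ha : IsStrictlyPositive a) (hb : IsStrictlyPositive b) (r : ℝ) :
    gm r a b = gm (1 - r) b a := by
  have hK := isSP_conj (ha.rpow a (-(1 / 2))) hb
  rw [gm, gm]
  have hPP := half_mul_half ha
  have hQQ := half_mul_half hb
  have h1 := CFC.rpow_neg_mul_rpow (1 / 2) ha
  have h2 := CFC.rpow_mul_rpow_neg (1 / 2) ha
  have h3 := CFC.rpow_neg_mul_rpow (1 / 2) hb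
  have h4 := CFC.rpow_mul_rpow_neg (1 / 2) hb
  have hPs := (ha.rpow a (-(1 / 2))).isSelfAdjoint
  have hQs := (hb.rpow b (1 / 2)).isSelfAdjoint
  have hQu := (hb.rpow b (1 / 2)).isUnit
  have hPu := (ha.rpow a (-(1 / 2))).isUnit
  set P := a ^ (1 / 2 : ℝ)
  set P' := a ^ (-(1 / 2) : ℝ)
  set Q := b ^ (1 / 2 : ℝ)
  set Q' := b ^ (-(1 / 2) : ℝ)
  set K := P' * b * P' with hKdef
  have hR := (hK.rpow K (-(1 / 2)))
  set R := K ^ (-(1 / 2) : ℝ) with hRdef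
  set U := Q * P' * R with hU
  have hUs : star U = R * P' * Q := by
    simp only [hU, star_mul, hR.isSelfAdjoint.star_eq, hPs.star_eq, hQs.star_eq, mul_assoc]
  have hUU : star U * U = 1 := by
    calc star U * U = R * (P' * (Q * Q) * P') * R := by rw [hUs, hU]; simp only [mul_assoc]
      _ = 1 := by rw [hQQ]; exact CFC.conjugate_rpow_neg_one_half K hK
  have hUu : IsUnit U := (hQu.mul hPu).mul hR.isUnit
  have hUU' : U * star U = 1 := by
    obtain ⟨V, hV⟩ := hUu.exists_right_inv
    rwa [← left_inv_eq_right_inv hUU hV] at hV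
  have hL : Q' * a * Q' = U * K ^ (-1 : ℝ) * star U := by
    have e1 : (Q' * a * Q') * (U * K * star U) = 1 := by
      have : R * K * R = 1 := CFC.conjugate_rpow_neg_one_half K hK
      calc (Q' * a * Q') * (U * K * star U)
          = Q' * (P * P) * (Q' * Q) * P' * (R * K * R) * P' * Q := by
            rw [hPP, hUs, hU]; simp only [mul_assoc]
        _ = Q' * P * (P * P') * P' * Q := by rw [this, h3]; simp only [mul_assoc, mul_one]
        _ = Q' * (P * P') * Q := by rw [h2, mul_one, mul_assoc Q', h2, mul_one]
        _ = 1 := by rw [h2, mul_one, h3]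
    have e2 : (U * K * star U) * (U * K ^ (-1 : ℝ) * star U) = 1 := by
      calc _ = U * (K * ((star U * U) * K ^ (-1 : ℝ))) * star U := by simp only [mul_assoc]
        _ = U * (K ^ (1 : ℝ) * K ^ (-1 : ℝ)) * star U := by
            rw [hUU, one_mul, CFC.rpow_one K hK.nonneg]
        _ = 1 := by rw [CFC.rpow_mul_rpow_neg 1 hK, mul_one, hUU']
    exact left_inv_eq_right_inv e1 e2
  have hKi := hK.rpow K (-1)
  have hpow : (Q' * a * Q') ^ (1 - r) = U * K ^ (r - 1) * star U := by
    rw [hL]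
    refine (conj_rpow ⟨U, ?_⟩ hKi.nonneg ?_).trans ?_
    · exact Unitary.mem_iff.2 ⟨hUU, hUU'⟩
    · exact fun x hx => (Real.continuousAt_rpow_const _ _
        (.inl (hKi.spectrum_pos hx).ne')).continuousWithinAt
    · rw [CFC.rpow_rpow K _ _ (by norm_num) hK]
      congr 3; ring
  have hbP : b * P' = P * K := by
    rw [hKdef, ← mul_assoc, ← mul_assoc, h2, one_mul]
  have hPb : P' * b = K * P := by
    rw [hKdef, mul_assoc, h1, mul_one]
  have hKr : K ^ r = K * (R * K ^ (r - 1) * R) * K := by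
    nth_rw 2 4 [← CFC.rpow_one K hK.nonneg]
    simp only [hRdef, ← CFC.rpow_add hK.isUnit]
    congr 1; ring
  calc P * K ^ r * P = (P * K) * (R * K ^ (r - 1) * R) * (K * P) := by
        rw [hKr]; simp only [mul_assoc]
    _ = Q * (U * K ^ (r - 1) * star U) * Q := by
        rw [← hbP, ← hPb, ← hQQ, hUs, hU]; simp only [mul_assoc]
    _ = _ := by rw [hpow]

lemma gm_mono (hr : r ∈ Set.Icc (0 : ℝ) 1) (ha : IsStrictlyPositive a) (hb : IsStrictlyPositive b)
    (hac : a ≤ c) (hbd : b ≤ d) : gm r a b ≤ gm r c d := by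
  have hd := hb.of_le hbd
  calc gm r a b ≤ gm r a d := gm_mono_right hr hbd
    _ = gm (1 - r) d a := gm_comm ha hd r
    _ ≤ gm (1 - r) d c := gm_mono_right ⟨by linarith [hr.2], by linarith [hr.1]⟩ hac
    _ = gm r c d := (gm_comm (ha.of_le hac) hd r).symm

/-- Convexity of the Thompson distance under weighted geometric means, in one-sided form. -/
lemma gm_le (hr : r ∈ Set.Icc (0 : ℝ) 1) (ha : IsStrictlyPositive a) (hb : IsStrictlyPositive b)
    (hc : IsStrictlyPositive c) (hd : IsStrictlyPositive d)
    (hac : a ≤ Real.exp s • c) (hbd : b ≤ Real.exp t • d) :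
    gm r a b ≤ Real.exp ((1 - r) * s + r * t) • gm r c d := by
  refine (gm_mono hr ha hb hac hbd).trans_eq ?_
  rw [gm_smul r hc hd (Real.exp_pos _) (Real.exp_pos _), ← Real.exp_mul, ← Real.exp_mul,
    ← Real.exp_add]
  congr 2; ring

lemma gm_self (ha : IsStrictlyPositive a) (r : ℝ) : gm r a a = a := by
  rw [gm, CFC.conjugate_rpow_neg_one_half a ha, CFC.one_rpow, mul_one, half_mul_half ha]

lemma exp_smul_mono (ha : IsStrictlyPositive a) (hst : s ≤ t) : Real.exp s • a ≤ Real.exp t • a :=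
  smul_le_smul_of_nonneg_right (Real.exp_le_exp.2 hst) ha.nonneg

/-- Any two strictly positive elements are at finite Thompson distance. -/
lemma exists_le_exp_smul (ha : IsStrictlyPositive a) (hb : IsStrictlyPositive b) :
    ∃ D : ℝ, 0 ≤ D ∧ a ≤ Real.exp D • b := by
  rcases subsingleton_or_nontrivial 𝓐 with _ | _
  · exact ⟨0, le_rfl, (Subsingleton.elim _ _).le⟩
  obtain ⟨ε, hε, hεb⟩ : ∃ r > 0, (algebraMap ℝ 𝓐) r ≤ b :=
    (CFC.exists_pos_algebraMap_le_iff hb.isSelfAdjoint).2 fun x hx ↦ hb.spectrum_pos hx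
  have h1 := IsSelfAdjoint.le_algebraMap_norm_self (a := a) ha.isSelfAdjoint
  refine ⟨max 0 (Real.log (‖a‖ / ε)), le_max_left _ _, ?_⟩
  have hn : 0 < ‖a‖ := norm_pos_iff.2 ha.isUnit.ne_zero
  calc a ≤ (‖a‖ / ε) • algebraMap ℝ 𝓐 ε := by
        rw [Algebra.algebraMap_eq_smul_one, smul_smul, div_mul_cancel₀ _ hε.ne',
          ← Algebra.algebraMap_eq_smul_one]
        exact h1
    _ ≤ (‖a‖ / ε) • b := smul_le_smul_of_nonneg_left hεb (by positivity)
    _ = Real.exp (Real.log (‖a‖ / ε)) • b := by rw [Real.exp_log (by positivity)]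
    _ ≤ _ := exp_smul_mono hb (le_max_right _ _)

/-- Two geometric means with a common second argument `c` are closer to each other than the diameter
of `a, b, c`, even when their weights differ. The longer of the two curves is split at the weight
of the shorter one by `gm_gm`, so that the mass on `c` shared by the two means costs nothing. -/
lemma contract {D κ : ℝ} (hD : 0 ≤ D) (hs : s ∈ Set.Ioo (0 : ℝ) 1) (ht : t ∈ Set.Ioo (0 : ℝ) 1)
    (hsκ : 1 - s ≤ κ) (htκ : 1 - t ≤ κ)
    (ha : IsStrictlyPositive a) (hb : IsStrictlyPositive b) (hc : IsStrictlyPositive c)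
    (hab : a ≤ Real.exp D • b) (hac : a ≤ Real.exp D • c) (hcb : c ≤ Real.exp D • b) :
    gm s a c ≤ Real.exp (κ * D) • gm t b c := by
  have hcc : c ≤ Real.exp 0 • c := by simp
  have hs' : s ∈ Set.Icc (0 : ℝ) 1 := ⟨hs.1.le, hs.2.le⟩
  have ht' : t ∈ Set.Icc (0 : ℝ) 1 := ⟨ht.1.le, ht.2.le⟩
  rcases le_total s t with h | h
  · have hu : s / t ∈ Set.Icc (0 : ℝ) 1 := ⟨div_nonneg hs'.1 ht'.1, div_le_one_of_le₀ h ht'.1⟩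
    have h1 := gm_le hu ha hc hc hc hac hcc
    rw [gm_self hc] at h1
    have h2 := gm_le ht' ha (isSP_gm (s / t) ha hc) hb hc hab h1
    rw [gm_gm ha hc (div_pos hs.1 ht.1).ne', div_mul_cancel₀ _ ht.1.ne'] at h2
    refine h2.trans (exp_smul_mono (isSP_gm _ hb hc) ?_)
    have : (1 - t) * D + t * ((1 - s / t) * D + s / t * 0) = (1 - s) * D := by
      field_simp [ht.1.ne']; ring
    rw [this]; gcongr
  · have hu : t / s ∈ Set.Icc (0 : ℝ) 1 := ⟨div_nonneg ht'.1 hs'.1, div_le_one_of_le₀ h hs'.1⟩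
    have h1 := gm_le hu hc hc hb hc hcb hcc
    rw [gm_self hc] at h1
    have h2 := gm_le hs' ha hc hb (isSP_gm (t / s) hb hc) hab h1
    rw [gm_gm hb hc (div_pos ht.1 hs.1).ne', div_mul_cancel₀ _ hs.1.ne'] at h2
    refine h2.trans (exp_smul_mono (isSP_gm _ hb hc) ?_)
    have : (1 - s) * D + s * ((1 - t / s) * D + t / s * 0) = (1 - t) * D := by
      field_simp [hs.1.ne']; ring
    rw [this]; gcongr

/-- The triple `a, b, c` has diameter at most `D` for the Thompson distance. -/
def Close (D : ℝ) (a b c : 𝓐) : Prop :=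
  (a ≤ Real.exp D • b ∧ b ≤ Real.exp D • a) ∧ (b ≤ Real.exp D • c ∧ c ≤ Real.exp D • b) ∧
    (c ≤ Real.exp D • a ∧ a ≤ Real.exp D • c)

lemma exists_close (ha : IsStrictlyPositive a) (hb : IsStrictlyPositive b)
    (hc : IsStrictlyPositive c) : ∃ D : ℝ, 0 ≤ D ∧ Close D a b c := by
  obtain ⟨d₁, h₁, k₁⟩ := exists_le_exp_smul ha hb
  obtain ⟨d₂, h₂, k₂⟩ := exists_le_exp_smul hb ha
  obtain ⟨d₃, h₃, k₃⟩ := exists_le_exp_smul hb hc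
  obtain ⟨d₄, h₄, k₄⟩ := exists_le_exp_smul hc hb
  obtain ⟨d₅, h₅, k₅⟩ := exists_le_exp_smul hc ha
  obtain ⟨d₆, h₆, k₆⟩ := exists_le_exp_smul ha hc
  refine ⟨d₁ + d₂ + d₃ + d₄ + d₅ + d₆, by positivity, ⟨k₁.trans (exp_smul_mono hb ?_),
    k₂.trans (exp_smul_mono ha ?_)⟩, ⟨k₃.trans (exp_smul_mono hc ?_),
    k₄.trans (exp_smul_mono hb ?_)⟩, k₅.trans (exp_smul_mono ha ?_),
    k₆.trans (exp_smul_mono hc ?_)⟩ <;> linarith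

/-- One ALM step contracts the Thompson diameter by any factor `κ` that bounds all the weights
`rᵢ` and `1 - rᵢ`. -/
lemma Close.step {D κ r₁ r₂ r₃ : ℝ} (hD : 0 ≤ D) (hr₁ : r₁ ∈ Set.Ioo (0 : ℝ) 1)
    (hr₂ : r₂ ∈ Set.Ioo (0 : ℝ) 1) (hr₃ : r₃ ∈ Set.Ioo (0 : ℝ) 1)
    (h₁ : r₁ ≤ κ) (h₂ : r₂ ≤ κ) (h₃ : r₃ ≤ κ)
    (h₁' : 1 - r₁ ≤ κ) (h₂' : 1 - r₂ ≤ κ) (h₃' : 1 - r₃ ≤ κ)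
    (ha : IsStrictlyPositive a) (hb : IsStrictlyPositive b) (hc : IsStrictlyPositive c)
    (h : Close D a b c) : Close (κ * D) (gm r₁ b c) (gm r₂ c a) (gm r₃ a b) := by
  obtain ⟨⟨hab, hba⟩, ⟨hbc, hcb⟩, hca, hac⟩ := h
  have flip : ∀ {r : ℝ}, r ∈ Set.Ioo (0 : ℝ) 1 → 1 - r ∈ Set.Ioo (0 : ℝ) 1 :=
    fun h => ⟨by linarith [h.2], by linarith [h.1]⟩
  have dbl : ∀ {r : ℝ}, r ≤ κ → 1 - (1 - r) ≤ κ := fun h => by linarith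
  refine ⟨?_, ?_, ?_⟩
  -- After swapping one mean, both members of each pair have the shared entry as second argument.
  · rw [gm_comm hc ha]
    exact ⟨contract hD hr₁ (flip hr₂) h₁' (dbl h₂) hb ha hc hba hbc hca,
      contract hD (flip hr₂) hr₁ (dbl h₂) h₁' ha hb hc hab hac hcb⟩
  · rw [gm_comm ha hb]
    exact ⟨contract hD hr₂ (flip hr₃) h₂' (dbl h₃) hc hb ha hcb hca hab,
      contract hD (flip hr₃) hr₂ (dbl h₃) h₂' hb hc ha hbc hba hac⟩
  · rw [gm_comm hb hc]
    exact ⟨contract hD hr₃ (flip hr₁) h₃' (dbl h₁) ha hc hb hac hab hbc,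
      contract hD (flip hr₁) hr₃ (dbl h₁) h₃' hc ha hb hca hcb hba⟩

end CStar

/-! ### Real sequences -/

/-- A nonnegative sequence that is decreasing up to factors `exp (e n)` with `e` summable
converges. -/
lemma tendsto_of_le_exp_mul {u e : ℕ → ℝ} (hu : ∀ n, 0 ≤ u n) (he : Summable e)
    (h : ∀ n, u (n + 1) ≤ Real.exp (e n) * u n) : ∃ l, Tendsto u atTop (𝓝 l) := by
  set S : ℕ → ℝ := fun n => ∑ k ∈ Finset.range n, e k
  have hS : Tendsto S atTop (𝓝 (∑' k, e k)) := he.hasSum.tendsto_sum_nat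
  -- Dividing by the accumulated factors makes the sequence decreasing.
  have hv : Antitone fun n => Real.exp (-S n) * u n := by
    refine antitone_nat_of_succ_le fun n => ?_
    calc Real.exp (-S (n + 1)) * u (n + 1)
        ≤ Real.exp (-S (n + 1)) * (Real.exp (e n) * u n) := by gcongr; exact h n
      _ = Real.exp (-S n) * u n := by
        rw [← mul_assoc, ← Real.exp_add]
        congr 2
        simp only [S, Finset.sum_range_succ]; ring
  have hbdd : BddBelow (Set.range fun n => Real.exp (-S n) * u n) :=
    ⟨0, by rintro _ ⟨n, rfl⟩; exact mul_nonneg (Real.exp_pos _).le (hu n)⟩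
  refine ⟨_, (((Real.continuous_exp.tendsto _).comp hS).mul
    (tendsto_atTop_ciInf hv hbdd)).congr fun n => ?_⟩
  simp [← mul_assoc, ← Real.exp_add]

/-- The analogue of `contract` for weighted arithmetic means of reals. -/
lemma scalar_contract {s t κ D x y z : ℝ} (hs : s ∈ Set.Ioo (0 : ℝ) 1)
    (ht : t ∈ Set.Ioo (0 : ℝ) 1) (hsκ : 1 - s ≤ κ) (htκ : 1 - t ≤ κ)
    (hxy : |x - y| ≤ D) (hxz : |x - z| ≤ D) (hyz : |y - z| ≤ D) :
    |((1 - s) * x + s * z) - ((1 - t) * y + t * z)| ≤ κ * D := by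
  obtain ⟨hs0, hs1⟩ := hs
  obtain ⟨ht0, ht1⟩ := ht
  have hD : 0 ≤ D := (abs_nonneg _).trans hxy
  rw [abs_le] at *
  have k₁ : (1 - s) * D ≤ κ * D := by gcongr
  have k₂ : (1 - t) * D ≤ κ * D := by gcongr
  rcases le_total s t with h | h
  · constructor <;> nlinarith
  · constructor <;> nlinarith

/-- A scalar ALM iteration, with weighted arithmetic means, converges to the average of its initial
values with respect to the stationary vector: that average is invariant along the iteration, while
the spread tends to zero. -/
lemma scalar_tendsto {r₁ r₂ r₃ p₁ p₂ p₃ : ℝ} (hr₁ : r₁ ∈ Set.Ioo (0:ℝ) 1)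
    (hr₂ : r₂ ∈ Set.Ioo (0:ℝ) 1) (hr₃ : r₃ ∈ Set.Ioo (0:ℝ) 1)
    (hpsum : p₁ + p₂ + p₃ = 1)
    (hstat₁ : p₁ = r₂ * p₂ + (1 - r₃) * p₃)
    (hstat₂ : p₂ = (1 - r₁) * p₁ + r₃ * p₃)
    (hstat₃ : p₃ = r₁ * p₁ + (1 - r₂) * p₂)
    {κ : ℝ} (hκ : κ < 1) (h₁ : r₁ ≤ κ) (h₂ : r₂ ≤ κ) (h₃ : r₃ ≤ κ)
    (h₁' : 1 - r₁ ≤ κ) (h₂' : 1 - r₂ ≤ κ) (h₃' : 1 - r₃ ≤ κ)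
    (a b c : ℕ → ℝ) (ha : ∀ n, a (n + 1) = (1 - r₁) * b n + r₁ * c n)
    (hb : ∀ n, b (n + 1) = (1 - r₂) * c n + r₂ * a n)
    (hc : ∀ n, c (n + 1) = (1 - r₃) * a n + r₃ * b n) :
    Tendsto a atTop (𝓝 (p₁ * a 0 + p₂ * b 0 + p₃ * c 0)) := by
  have flip : ∀ {r : ℝ}, r ∈ Set.Ioo (0 : ℝ) 1 → 1 - r ∈ Set.Ioo (0 : ℝ) 1 :=
    fun h => ⟨by linarith [h.2], by linarith [h.1]⟩
  have dbl : ∀ {r : ℝ}, r ≤ κ → 1 - (1 - r) ≤ κ := fun h => by linarith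
  have hinv : ∀ n, p₁ * a n + p₂ * b n + p₃ * c n = p₁ * a 0 + p₂ * b 0 + p₃ * c 0 := by
    intro n
    induction n with
    | zero => rfl
    | succ n ih =>
      rw [← ih, ha, hb, hc]
      linear_combination (-a n) * hstat₁ - b n * hstat₂ - c n * hstat₃
  set D := |a 0 - b 0| + |b 0 - c 0| + |c 0 - a 0| with hDdef
  have hdiff : ∀ n, |a n - b n| ≤ κ ^ n * D ∧ |b n - c n| ≤ κ ^ n * D ∧
      |c n - a n| ≤ κ ^ n * D := by
    intro n
    induction n with
    | zero =>
      have := abs_nonneg (a 0 - b 0)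
      have := abs_nonneg (b 0 - c 0)
      have := abs_nonneg (c 0 - a 0)
      refine ⟨?_, ?_, ?_⟩ <;> simp only [pow_zero, one_mul] <;> linarith
    | succ n ih =>
      obtain ⟨hab, hbc, hca⟩ := ih
      have hba := abs_sub_comm (a n) (b n) ▸ hab
      have hcb := abs_sub_comm (b n) (c n) ▸ hbc
      have hac := abs_sub_comm (c n) (a n) ▸ hca
      rw [ha, hb, hc, pow_succ', mul_assoc]
      refine ⟨?_, ?_, ?_⟩
      · convert scalar_contract hr₁ (flip hr₂) h₁' (dbl h₂) hba hbc hac using 2; ring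
      · convert scalar_contract hr₂ (flip hr₃) h₂' (dbl h₃) hcb hca hba using 2; ring
      · convert scalar_contract hr₃ (flip hr₁) h₃' (dbl h₁) hac hab hcb using 2; ring
  have hκ0 : 0 ≤ κ := hr₁.1.le.trans h₁
  have hlim : Tendsto (fun n => κ ^ n * D) atTop (𝓝 0) := by
    simpa using (tendsto_pow_atTop_nhds_zero_of_lt_one hκ0 hκ).mul_const D
  have hab : Tendsto (fun n => a n - b n) atTop (𝓝 0) :=
    squeeze_zero_norm (fun n => (hdiff n).1) hlim
  have hca : Tendsto (fun n => c n - a n) atTop (𝓝 0) :=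
    squeeze_zero_norm (fun n => (hdiff n).2.2) hlim
  have := ((hab.const_mul p₂).sub (hca.const_mul p₃)).const_add
    (p₁ * a 0 + p₂ * b 0 + p₃ * c 0)
  simp only [mul_zero, sub_zero, add_zero] at this
  refine this.congr fun n => ?_
  rw [← hinv n]
  linear_combination (a n) * hpsum

/-! ### ALM-sequences of operators -/

section Operators

lemma geomMean_eq_gm {A B : H →L[ℂ] H} (hA : IsStrictlyPositive A) (hB : IsStrictlyPositive B)
    (r : ℝ) : geomMean r A B = gm r A B := by
  have e : ∀ {T : H →L[ℂ] H} (_ : 0 ≤ T) (s : ℝ), opPow T s = T ^ s :=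
    fun hT s => (CFC.rpow_eq_cfc_real hT).symm
  rw [geomMean, gm, e hA.nonneg, e hA.nonneg, e (isSP_conj (hA.rpow _ _) hB).nonneg]

lemma reApplyInnerSelf_real_smul (t : ℝ) (T : H →L[ℂ] H) (x : H) :
    (t • T).reApplyInnerSelf x = t * T.reApplyInnerSelf x := by
  rw [← Complex.coe_smul]
  simp [ContinuousLinearMap.reApplyInnerSelf_apply, inner_smul_left, -Complex.coe_smul]

lemma reApplyInnerSelf_le_of_le_smul {S T : H →L[ℂ] H} {t : ℝ} (h : S ≤ t • T) (x : H) :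
    S.reApplyInnerSelf x ≤ t * T.reApplyInnerSelf x := by
  have := (ContinuousLinearMap.le_def _ _ |>.1 h).re_inner_nonneg_left x
  rw [← reApplyInnerSelf_real_smul]
  simpa [ContinuousLinearMap.reApplyInnerSelf_apply, inner_sub_left] using this

/-- The logarithms of the scalars by which the ALM-sequence is multiplied when its initial triple is
multiplied by `exp x`, `exp y`, `exp z`; each step takes weighted arithmetic means. -/
def logWeights (r₁ r₂ r₃ x y z : ℝ) : ℕ → ℝ × ℝ × ℝ
  | 0 => (x, y, z)
  | n + 1 =>
    let t := logWeights r₁ r₂ r₃ x y z n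
    ((1 - r₁) * t.2.1 + r₁ * t.2.2, (1 - r₂) * t.2.2 + r₂ * t.1, (1 - r₃) * t.1 + r₃ * t.2.1)

variable {r₁ r₂ r₃ : ℝ} {A B C : H →L[ℂ] H}

lemma isSP_ALMseq (hA : IsStrictlyPositive A) (hB : IsStrictlyPositive B)
    (hC : IsStrictlyPositive C) (n : ℕ) :
    let t := ALMseq (geomMean r₁) (geomMean r₂) (geomMean r₃) A B C n
    IsStrictlyPositive t.1 ∧ IsStrictlyPositive t.2.1 ∧ IsStrictlyPositive t.2.2 := by
  induction n with
  | zero => exact ⟨hA, hB, hC⟩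
  | succ n ih =>
    obtain ⟨ha, hb, hc⟩ := ih
    simp only [ALMseq]
    rw [geomMean_eq_gm hb hc, geomMean_eq_gm hc ha, geomMean_eq_gm ha hb]
    exact ⟨isSP_gm _ hb hc, isSP_gm _ hc ha, isSP_gm _ ha hb⟩

/-- The recursion of the ALM-sequence, with `gm` in place of `geomMean`. -/
lemma ALMseq_succ (hA : IsStrictlyPositive A) (hB : IsStrictlyPositive B)
    (hC : IsStrictlyPositive C) (n : ℕ) :
    ALMseq (geomMean r₁) (geomMean r₂) (geomMean r₃) A B C (n + 1) =
      let t := ALMseq (geomMean r₁) (geomMean r₂) (geomMean r₃) A B C n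
      (gm r₁ t.2.1 t.2.2, gm r₂ t.2.2 t.1, gm r₃ t.1 t.2.1) := by
  obtain ⟨ha, hb, hc⟩ := isSP_ALMseq (r₁ := r₁) (r₂ := r₂) (r₃ := r₃) hA hB hC n
  simp only [ALMseq]
  rw [geomMean_eq_gm hb hc, geomMean_eq_gm hc ha, geomMean_eq_gm ha hb]

/-- Joint homogeneity of every term of the ALM-sequence. -/
lemma ALMseq_exp_smul (hA : IsStrictlyPositive A) (hB : IsStrictlyPositive B)
    (hC : IsStrictlyPositive C) (x y z : ℝ) (n : ℕ) :
    ALMseq (geomMean r₁) (geomMean r₂) (geomMean r₃)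
        (Real.exp x • A) (Real.exp y • B) (Real.exp z • C) n =
      let t := ALMseq (geomMean r₁) (geomMean r₂) (geomMean r₃) A B C n
      let w := logWeights r₁ r₂ r₃ x y z n
      (Real.exp w.1 • t.1, Real.exp w.2.1 • t.2.1, Real.exp w.2.2 • t.2.2) := by
  induction n with
  | zero => rfl
  | succ n ih =>
    have key : ∀ {S T : H →L[ℂ] H} (_ : IsStrictlyPositive S) (_ : IsStrictlyPositive T)
        (r u v : ℝ), gm r (Real.exp u • S) (Real.exp v • T) =
          Real.exp ((1 - r) * u + r * v) • gm r S T := by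
      intro S T hS hT r u v
      rw [gm_smul r hS hT (Real.exp_pos _) (Real.exp_pos _), ← Real.exp_mul, ← Real.exp_mul,
        ← Real.exp_add]
      congr 2; ring
    obtain ⟨ha, hb, hc⟩ := isSP_ALMseq (r₁ := r₁) (r₂ := r₂) (r₃ := r₃) hA hB hC n
    rw [ALMseq_succ (hA.smul (Real.exp_pos _)) (hB.smul (Real.exp_pos _))
      (hC.smul (Real.exp_pos _)), ih, ALMseq_succ hA hB hC]
    simp only [logWeights]
    rw [key hb hc, key hc ha, key ha hb]

/-- A contraction factor that works for all three weights in both orientations. -/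
lemma exists_ratio (hr₁ : r₁ ∈ Set.Ioo (0 : ℝ) 1)
    (hr₂ : r₂ ∈ Set.Ioo (0 : ℝ) 1) (hr₃ : r₃ ∈ Set.Ioo (0 : ℝ) 1) :
    ∃ κ : ℝ, κ < 1 ∧ (r₁ ≤ κ ∧ r₂ ≤ κ ∧ r₃ ≤ κ) ∧ 1 - r₁ ≤ κ ∧ 1 - r₂ ≤ κ ∧ 1 - r₃ ≤ κ := by
  obtain ⟨⟨a, a'⟩, ⟨b, b'⟩, ⟨c, c'⟩⟩ := And.intro hr₁ (And.intro hr₂ hr₃)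
  refine ⟨max (max r₁ (max r₂ r₃)) (max (1 - r₁) (max (1 - r₂) (1 - r₃))), ?_, ?_⟩
  · simp only [max_lt_iff]
    exact ⟨⟨a', b', c'⟩, by linarith, by linarith, by linarith⟩
  · simp

lemma exists_tendsto_ALMseq (hr₁ : r₁ ∈ Set.Ioo (0 : ℝ) 1)
    (hr₂ : r₂ ∈ Set.Ioo (0 : ℝ) 1) (hr₃ : r₃ ∈ Set.Ioo (0 : ℝ) 1)
    (hA : IsStrictlyPositive A) (hB : IsStrictlyPositive B) (hC : IsStrictlyPositive C) (x : H) :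
    ∃ l : ℝ, Tendsto (fun n =>
      ((ALMseq (geomMean r₁) (geomMean r₂) (geomMean r₃) A B C n).1).reApplyInnerSelf x)
      atTop (𝓝 l) := by
  obtain ⟨κ, hκ, ⟨h₁, h₂, h₃⟩, h₁', h₂', h₃'⟩ := exists_ratio hr₁ hr₂ hr₃
  have hκ0 : 0 ≤ κ := hr₁.1.le.trans h₁
  obtain ⟨D, hD, hclose⟩ := exists_close hA hB hC
  set T := ALMseq (geomMean r₁) (geomMean r₂) (geomMean r₃) A B C with hT
  have hsp := isSP_ALMseq (r₁ := r₁) (r₂ := r₂) (r₃ := r₃) hA hB hC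
  have hstep := ALMseq_succ (r₁ := r₁) (r₂ := r₂) (r₃ := r₃) hA hB hC
  rw [← hT] at hsp hstep
  have hcl : ∀ n, Close (κ ^ n * D) (T n).1 (T n).2.1 (T n).2.2 := by
    intro n
    induction n with
    | zero => simpa [hT, ALMseq] using hclose
    | succ n ih =>
      obtain ⟨ha, hb, hc⟩ := hsp n
      rw [hstep n, pow_succ', mul_assoc]
      exact ih.step (by positivity) hr₁ hr₂ hr₃ h₁ h₂ h₃ h₁' h₂' h₃' ha hb hc
  refine tendsto_of_le_exp_mul (e := fun n => κ ^ n * D) (fun n => ?_)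
    ((summable_geometric_of_lt_one hκ0 hκ).mul_right D) (fun n => ?_)
  · exact ((ContinuousLinearMap.nonneg_iff_isPositive _).1 (hsp n).1.nonneg).re_inner_nonneg_left x
  -- `Aₙ₊₁` is a mean of `Bₙ` and `Cₙ`, both close to `Aₙ`, and `Aₙ` is its own mean with itself.
  · refine reApplyInnerSelf_le_of_le_smul ?_ x
    obtain ⟨ha, hb, hc⟩ := hsp n
    have := gm_le ⟨hr₁.1.le, hr₁.2.le⟩ hb hc ha ha (hcl n).1.2 (hcl n).2.2.1
    rw [gm_self ha] at this
    rw [hstep n]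
    convert this using 3
    ring

end Operators

/-- Joint homogeneity: for the ALM-sequences built from weighted geometric
means `(#_{r₁}, #_{r₂}, #_{r₃})`, from `(A,B,C)` and from `(αA, βB, γC)`, and the stationary
probability vector `(p₁,p₂,p₃)` for `(r₁,r₂,r₃)`, for every `x ∈ H` the limits
`limₙ ⟨Aₙx, x⟩` and `limₙ ⟨Aₙ'x, x⟩` exist and
`limₙ ⟨Aₙ'x, x⟩ = α^{p₁} β^{p₂} γ^{p₃} · limₙ ⟨Aₙx, x⟩`. -/
theorem stmt_12
    (r₁ r₂ r₃ : ℝ) (hr₁ : r₁ ∈ Set.Ioo (0:ℝ) 1) (hr₂ : r₂ ∈ Set.Ioo (0:ℝ) 1)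
    (hr₃ : r₃ ∈ Set.Ioo (0:ℝ) 1)
    (p₁ p₂ p₃ : ℝ) (hp₁ : 0 ≤ p₁) (hp₂ : 0 ≤ p₂) (hp₃ : 0 ≤ p₃) (hpsum : p₁ + p₂ + p₃ = 1)
    (hstat₁ : p₁ = r₂ * p₂ + (1 - r₃) * p₃)
    (hstat₂ : p₂ = (1 - r₁) * p₁ + r₃ * p₃)
    (hstat₃ : p₃ = r₁ * p₁ + (1 - r₂) * p₂)
    (A B C : H →L[ℂ] H) (hA : A.IsPositive) (hB : B.IsPositive) (hC : C.IsPositive)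
    (hAu : IsUnit A) (hBu : IsUnit B) (hCu : IsUnit C)
    (α β γ : ℝ) (hα : 0 < α) (hβ : 0 < β) (hγ : 0 < γ)
    (x : H) :
    ∃ l : ℝ,
      Tendsto (fun n =>
        ((ALMseq (geomMean r₁) (geomMean r₂) (geomMean r₃) A B C n).1).reApplyInnerSelf x)
        atTop (𝓝 l) ∧
      Tendsto (fun n =>
        ((ALMseq (geomMean r₁) (geomMean r₂) (geomMean r₃)
          ((α : ℂ) • A) ((β : ℂ) • B) ((γ : ℂ) • C) n).1).reApplyInnerSelf x)
        atTop (𝓝 (α ^ p₁ * β ^ p₂ * γ ^ p₃ * l)) := by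
  have hA' := hAu.isStrictlyPositive ((ContinuousLinearMap.nonneg_iff_isPositive A).2 hA)
  have hB' := hBu.isStrictlyPositive ((ContinuousLinearMap.nonneg_iff_isPositive B).2 hB)
  have hC' := hCu.isStrictlyPositive ((ContinuousLinearMap.nonneg_iff_isPositive C).2 hC)
  obtain ⟨l, hl⟩ := exists_tendsto_ALMseq hr₁ hr₂ hr₃ hA' hB' hC' x
  refine ⟨l, hl, ?_⟩
  obtain ⟨κ, hκ, ⟨h₁, h₂, h₃⟩, h₁', h₂', h₃'⟩ := exists_ratio hr₁ hr₂ hr₃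
  set w := logWeights r₁ r₂ r₃ (Real.log α) (Real.log β) (Real.log γ) with hw
  have hlog : Tendsto (fun n => (w n).1) atTop
      (𝓝 (p₁ * Real.log α + p₂ * Real.log β + p₃ * Real.log γ)) :=
    scalar_tendsto hr₁ hr₂ hr₃ hpsum hstat₁ hstat₂ hstat₃ hκ h₁ h₂ h₃ h₁' h₂' h₃'
      (fun n => (w n).1) (fun n => (w n).2.1) (fun n => (w n).2.2)
      (fun _ => rfl) (fun _ => rfl) (fun _ => rfl)
  have hconst : α ^ p₁ * β ^ p₂ * γ ^ p₃ =
      Real.exp (p₁ * Real.log α + p₂ * Real.log β + p₃ * Real.log γ) := by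
    rw [Real.rpow_def_of_pos hα, Real.rpow_def_of_pos hβ, Real.rpow_def_of_pos hγ,
      ← Real.exp_add, ← Real.exp_add]
    congr 1; ring
  rw [hconst]
  refine (((Real.continuous_exp.tendsto _).comp hlog).mul hl).congr fun n => ?_
  have hseq := ALMseq_exp_smul (r₁ := r₁) (r₂ := r₂) (r₃ := r₃) hA' hB' hC'
    (Real.log α) (Real.log β) (Real.log γ) n
  rw [Real.exp_log hα, Real.exp_log hβ, Real.exp_log hγ] at hseq
  simp only [Complex.coe_smul]
  rw [hseq, reApplyInnerSelf_real_smul]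
  rfl
end
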